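/- arXiv:2106.03005 — 2 statements merged into one kernel-verified Lean document; each statement's English description precedes it below -/
import Mathlib

section
/- Fix an integer n ≥ 0. If T is admissible (i.e. |T − γ| ≥ δ/log T for every ordinate γ of a non-trivial zero of ζ, for some fixed δ > 0), then uniformly for −1 ≤ σ ≤ 2, the n-th derivative of ζ'/ζ satisfies (ζ'/ζ)^{(n)}(σ + iT) ≪ log^{n+2} T, with implied constant depending only on n and δ. -/
open Complex Filter

/-- A non-trivial zero of the Riemann zeta function. -/
def IsNontrivialZero (ρ : ℂ) : Prop :=
  riemannZeta ρ = 0 ∧ 0 < ρ.re ∧ ρ.re < 1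

/-- `T` is admissible: `|T - γ| ≥ δ / log T` for every ordinate `γ` of a
non-trivial zero of `ζ`. -/
def AdmissibleHeight (δ T : ℝ) : Prop :=
  ∀ ρ : ℂ, IsNontrivialZero ρ → δ / Real.log T ≤ |T - ρ.im|


lemma zf_bound {f : ℂ → ℂ} {M : ℝ} (hM : 0 < M) (hf : DifferentiableOn ℂ f (Metric.ball 0 4))
    (h0 : ∀ z ∈ Metric.ball (0:ℂ) 4, f z ≠ 0) (hb : ∀ z ∈ Metric.ball (0:ℂ) 4, ‖f z‖ ≤ Real.exp M)
    (hl : Real.exp (-M) ≤ ‖f 0‖) {w : ℂ} (hw : ‖w‖ ≤ 7/2) :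
    ‖deriv f w / f w‖ ≤ 240 * M := by
  have hd : DifferentiableOn ℂ (fun z => deriv f z / f z) (Metric.ball 0 4) :=
    (hf.deriv Metric.isOpen_ball).div hf h0
  obtain ⟨g, hg0, hg⟩ := hd.isExactOn_ball.with_val_at 0 0
  have hc : ∀ z ∈ Metric.ball (0:ℂ) 4, f z = f 0 * exp (g z) := by
    intro z hz
    have hD : ∀ x ∈ Metric.ball (0:ℂ) 4, HasDerivAt (fun z => f z * exp (-g z)) 0 x := by
      intro x hx
      have h1 := (hf.differentiableAt (Metric.isOpen_ball.mem_nhds hx)).hasDerivAt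
      have h2 := (hg x hx).neg.cexp
      have h3 := h1.mul h2
      have h4 := h0 x hx
      have h5 : deriv f x * cexp ((-g) x) + f x * (cexp ((-g) x) * -(deriv f x / f x)) = 0 := by
        field_simp; ring
      rw [h5] at h3
      exact h3
    have := Metric.isOpen_ball.is_const_of_deriv_eq_zero (f := fun z => f z * exp (-g z)) (𝕜 := ℂ)
      (convex_ball (0:ℂ) 4).isPreconnected (fun x hx => (hD x hx).differentiableAt.differentiableWithinAt)
      (fun x hx => (hD x hx).deriv) hz (Metric.mem_ball_self (by norm_num))
    simp only [hg0, neg_zero, exp_zero, mul_one] at this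
    rw [← this, mul_assoc, ← exp_add]; simp
  have hf0 : 0 < ‖f 0‖ := lt_of_lt_of_le (Real.exp_pos _) hl
  have hre : Set.MapsTo g (Metric.ball 0 4) {z | z.re ≤ 2 * M} := by
    intro z hz
    have h1 := hb z hz
    rw [hc z hz, norm_mul, norm_exp] at h1
    have h2 : Real.exp (-M) * Real.exp (g z).re ≤ Real.exp M :=
      le_trans (mul_le_mul_of_nonneg_right hl (Real.exp_pos _).le) h1
    rw [← Real.exp_add, Real.exp_le_exp] at h2
    simp only [Set.mem_ofPred_eq]; linarith
  have hgd : DifferentiableOn ℂ g (Metric.ball 0 4) :=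
    fun x hx => (hg x hx).differentiableAt.differentiableWithinAt
  have hsub : Metric.closedBall w (1/4) ⊆ Metric.closedBall (0:ℂ) (15/4) := by
    intro z hz
    simp only [Metric.mem_closedBall, dist_eq_norm, sub_zero] at hz ⊢
    calc ‖z‖ = ‖(z - w) + w‖ := by simp
      _ ≤ _ := norm_add_le _ _
      _ ≤ _ := by linarith
  have hsub2 : Metric.closedBall (0:ℂ) (15/4) ⊆ Metric.ball (0:ℂ) 4 :=
    Metric.closedBall_subset_ball (by norm_num)
  have hw4 : w ∈ Metric.ball (0:ℂ) 4 := by simp; linarith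
  rw [← (hg w hw4).deriv]
  have := norm_deriv_le_of_forall_mem_sphere_norm_le (c := w) (R := 1/4) (C := 60 * M) (f := g)
    (by norm_num) (hgd.diffContOnCl_ball (hsub.trans hsub2)) (by
      intro z hz
      have hz1 := hsub (Metric.sphere_subset_closedBall hz)
      have hb := borelCaratheodory_zero (by positivity) hgd hre (by norm_num) (hsub2 hz1) hg0
      simp only [Metric.mem_closedBall, dist_eq_norm, sub_zero] at hz1
      refine hb.trans ?_
      rw [div_le_iff₀ (by linarith)]
      nlinarith)
  linarith

lemma landau_step {M d : ℝ} (hM : 0 < M) (hd : 0 < d) {w : ℂ} (hw : ‖w‖ ≤ 7/2) (k : ℕ) :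
    ∀ f : ℂ → ℂ, DifferentiableOn ℂ f (Metric.ball 0 6) →
    (∀ z ∈ Metric.closedBall (0:ℂ) 5, ‖f z‖ ≤ Real.exp M) →
    Real.exp (-M) ≤ ‖f 0‖ → Real.exp M < ‖f 0‖ * (5/4)^k →
    (∀ ρ ∈ Metric.ball (0:ℂ) 4, f ρ = 0 → d ≤ ‖w - ρ‖) →
    ‖deriv f w / f w‖ ≤ 240 * M + k * (1/d + 1) := by
  have hw4 : w ∈ Metric.ball (0:ℂ) 4 := by simp; linarith
  induction k with
  | zero =>
    intro f hf hb hl hk hz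
    have := hb 0 (by simp)
    simp at hk
    linarith
  | succ k ih =>
    intro f hf hb hl hk hz
    by_cases hzero : ∀ z ∈ Metric.ball (0:ℂ) 4, f z ≠ 0
    · have := zf_bound hM (hf.mono (Metric.ball_subset_ball (by norm_num))) hzero
        (fun z hz => hb z (Metric.ball_subset_closedBall.trans
          (Metric.closedBall_subset_closedBall (by norm_num)) hz)) hl hw
      have : 0 ≤ ((k+1:ℕ):ℝ) * (1/d+1) := by positivity
      linarith
    push Not at hzero
    obtain ⟨ρ, hρ, hfρ⟩ := hzero
    have hρn : ‖ρ‖ < 4 := by simpa using hρ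
    have hf0 : 0 < ‖f 0‖ := lt_of_lt_of_le (Real.exp_pos _) hl
    have hρ0 : ρ ≠ 0 := by rintro rfl; simp [hfρ] at hf0
    have hdd : d ≤ ‖w - ρ‖ := hz ρ hρ hfρ
    have hwρ : w - ρ ≠ 0 := by
      intro h; rw [h] at hdd; simp at hdd; linarith
    have hfw : f w ≠ 0 := by
      intro h; have := hz w hw4 h; simp at this; linarith
    set q := starRingEnd ℂ ρ with hq
    have hqn : ‖q‖ = ‖ρ‖ := by simp [hq]
    set D := dslope f ρ with hD
    have hfD : ∀ z, f z = (z - ρ) * D z := by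
      intro z
      have := sub_smul_dslope f ρ z
      simp only [smul_eq_mul, hfρ, sub_zero] at this
      exact this.symm
    have hρ6 : Metric.ball (0:ℂ) 6 ∈ nhds ρ :=
      Metric.isOpen_ball.mem_nhds (by simp; linarith)
    have hDd : DifferentiableOn ℂ D (Metric.ball 0 6) := (differentiableOn_dslope hρ6).2 hf
    set f1 : ℂ → ℂ := fun z => D z * ((25 - q * z) / 5) with hf1
    have hf1d : DifferentiableOn ℂ f1 (Metric.ball 0 6) := hDd.mul (by fun_prop)
    have h55 : Metric.closedBall (0:ℂ) 5 ⊆ Metric.ball 0 6 :=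
      Metric.closedBall_subset_ball (by norm_num)
    have hrel : ∀ z, f z * (25 - q * z) = 5 * ((z - ρ) * f1 z) := by
      intro z; rw [hfD z, hf1]; ring
    have hf1b : ∀ z ∈ Metric.closedBall (0:ℂ) 5, ‖f1 z‖ ≤ Real.exp M := by
      intro z hz
      refine norm_le_of_forall_mem_frontier_norm_le (U := Metric.ball (0:ℂ) 5) Metric.isBounded_ball
        (hf1d.diffContOnCl_ball h55) ?_ ?_
      · rw [frontier_ball _ (by norm_num)]
        intro x hx
        have hx' : ‖x‖ = 5 := by simpa using hx
        have h25 : (25:ℂ) = starRingEnd ℂ x * x := by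
          rw [← normSq_eq_conj_mul_self, normSq_eq_norm_sq, hx']; norm_num
        have e1 : ‖(25 - q * x) / 5‖ = ‖x - ρ‖ := by
          rw [h25, ← sub_mul, hq, ← map_sub, norm_div, norm_mul, hx', RCLike.norm_conj]; norm_num
        calc ‖f1 x‖ = ‖f x‖ := by rw [hf1, hfD x]; simp only [norm_mul]; rw [e1, mul_comm]
          _ ≤ _ := hb x (Metric.sphere_subset_closedBall hx)
      · rw [closure_ball _ (by norm_num)]; exact hz
    have hρpos : 0 < ‖ρ‖ := norm_pos_iff.2 hρ0
    have hf10 : 5/4 * ‖f 0‖ ≤ ‖f1 0‖ := by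
      have := congrArg norm (hrel 0)
      simp only [mul_zero, sub_zero, zero_sub, norm_mul, norm_neg, norm_ofNat] at this
      have h4 : ‖ρ‖ * ‖f1 0‖ ≤ 4 * ‖f1 0‖ := mul_le_mul_of_nonneg_right hρn.le (norm_nonneg _)
      linarith
    have hden : ∀ z ∈ Metric.ball (0:ℂ) 4, 11 - 2 ≤ ‖25 - q * z‖ := by
      intro z hz
      have hz4 : ‖z‖ < 4 := by simpa using hz
      have h1 : ‖(25:ℂ)‖ - ‖q * z‖ ≤ ‖25 - q * z‖ := norm_sub_norm_le _ _
      rw [norm_mul, hqn, norm_ofNat] at h1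
      nlinarith [norm_nonneg z, norm_nonneg ρ]
    have hden0 : ∀ z ∈ Metric.ball (0:ℂ) 4, 25 - q * z ≠ 0 := by
      intro z hz h; have := hden z hz; rw [h] at this; norm_num at this
    have key := ih f1 hf1d hf1b (by linarith) (by
      rw [pow_succ] at hk
      have : 5/4 * ‖f 0‖ * (5/4)^k ≤ ‖f1 0‖ * (5/4)^k :=
        mul_le_mul_of_nonneg_right hf10 (by positivity)
      linarith) (by
      intro r hr h
      refine hz r hr ?_
      have := hrel r
      rw [h] at this
      simp only [mul_zero, mul_eq_zero, hden0 r hr, or_false] at this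
      exact this)
    have hw6 : w ∈ Metric.ball (0:ℂ) 6 := by simp; linarith
    have hfd := (hf.differentiableAt (Metric.isOpen_ball.mem_nhds hw6)).hasDerivAt
    have hf1d' := (hf1d.differentiableAt (Metric.isOpen_ball.mem_nhds hw6)).hasDerivAt
    have hL : HasDerivAt (fun z => f z * (25 - q * z)) (deriv f w * (25 - q * w) + f w * (-q)) w := by
      have := ((hasDerivAt_id w).const_mul q).const_sub 25
      simp only [mul_one, id] at this
      exact hfd.mul this
    have hR : HasDerivAt (fun z => 5 * ((z - ρ) * f1 z)) (5 * (1 * f1 w + (w - ρ) * deriv f1 w)) w :=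
      (((hasDerivAt_id w).sub_const ρ).mul hf1d').const_mul 5
    have hLR := hL.unique (by rw [funext hrel]; exact hR)
    have hQ := hden0 w hw4
    have hf1w : f1 w ≠ 0 := by
      intro h
      have := hrel w
      rw [h] at this
      simp [hfw, hQ] at this
    have e : deriv f w / f w = deriv f1 w / f1 w + (1 / (w - ρ) + q / (25 - q * w)) := by
      have hrw := hrel w
      have e2 : deriv f w / f w = (5 * (1 * f1 w + (w - ρ) * deriv f1 w)) / (f w * (25 - q * w)) + q / (25 - q * w) := by
        rw [← hLR]; field_simp; ring
      rw [e2, hrw]; field_simp; ring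
    have b1 : ‖1 / (w - ρ)‖ ≤ 1 / d := by
      rw [norm_div, norm_one]; exact one_div_le_one_div_of_le hd hdd
    have b2 : ‖q / (25 - q * w)‖ ≤ 1 := by
      have := hden w hw4
      rw [norm_div, div_le_one (by linarith), hqn]; linarith
    rw [e]
    refine (norm_add_le _ _).trans ?_
    have := norm_add_le (1 / (w - ρ)) (q / (25 - q * w))
    push_cast
    linarith

lemma landau {f : ℂ → ℂ} {M d : ℝ} (hM : 1 ≤ M) (hd : 0 < d) (hd1 : d ≤ 1) {w : ℂ} (hw : ‖w‖ ≤ 7/2)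
    (hf : DifferentiableOn ℂ f (Metric.ball 0 6))
    (hb : ∀ z ∈ Metric.closedBall (0:ℂ) 5, ‖f z‖ ≤ Real.exp M)
    (hl : Real.exp (-M) ≤ ‖f 0‖)
    (hz : ∀ ρ ∈ Metric.ball (0:ℂ) 4, f ρ = 0 → d ≤ ‖w - ρ‖) :
    ‖deriv f w / f w‖ ≤ 262 * M / d := by
  have hk : Real.exp M < ‖f 0‖ * (5/4)^(⌊10 * M⌋₊ + 1) := by
    set k := ⌊10 * M⌋₊ + 1 with hk
    have h1 : 10 * M < k := by rw [hk]; push_cast; exact Nat.lt_floor_add_one _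
    have h2 : 1/5 ≤ Real.log (5/4) := by
      have := Real.one_sub_inv_le_log_of_pos (show (0:ℝ) < 5/4 by norm_num)
      norm_num at this ⊢; linarith
    have h3 : Real.exp (2 * M) < (5/4:ℝ)^k := by
      rw [← Real.exp_log (show (0:ℝ) < 5/4 by norm_num), ← Real.exp_nat_mul, Real.exp_lt_exp]
      nlinarith
    calc Real.exp M = Real.exp (-M) * Real.exp (2 * M) := by rw [← Real.exp_add]; ring_nf
      _ < Real.exp (-M) * (5/4:ℝ)^k := by gcongr
      _ ≤ _ := by gcongr
  refine (landau_step (by linarith) hd hw _ f hf hb hl hk hz).trans ?_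
  have h1 : ((⌊10 * M⌋₊ + 1 : ℕ) : ℝ) ≤ 11 * M := by
    push_cast; have := Nat.floor_le (show 0 ≤ 10 * M by linarith); linarith
  have h2 : 1 ≤ 1 / d := by rw [le_div_iff₀ hd]; linarith
  have h3 : ((⌊10 * M⌋₊ + 1 : ℕ) : ℝ) * (1/d + 1) ≤ 11 * M * (1/d + 1/d) := by gcongr
  have h4 : 240 * M ≤ 240 * M * (1/d) := le_mul_of_one_le_right (by linarith) h2
  calc _ ≤ 240 * M * (1/d) + 11 * M * (1/d + 1/d) := by linarith
    _ = _ := by ring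


lemma mellin_strip_bound {f : ℝ → ℂ} (hf : ∀ s : ℂ, MellinConvergent f s) (a b : ℝ) :
    ∃ C : ℝ, 0 ≤ C ∧ ∀ s : ℂ, a ≤ s.re → s.re ≤ b → ‖mellin f s‖ ≤ C := by
  have ha := (hf a).norm
  have hb := (hf b).norm
  refine ⟨∫ t in Set.Ioi (0:ℝ), (‖(t:ℂ) ^ ((a:ℂ) - 1) • f t‖ + ‖(t:ℂ) ^ ((b:ℂ) - 1) • f t‖),
    MeasureTheory.integral_nonneg (fun t => by positivity), ?_⟩
  intro s hsa hsb
  rw [mellin]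
  refine MeasureTheory.norm_integral_le_of_norm_le (ha.add hb) ?_
  refine (MeasureTheory.ae_restrict_iff' measurableSet_Ioi).2 (Eventually.of_forall ?_)
  intro t (ht : 0 < t)
  simp only [norm_smul, norm_cpow_eq_rpow_re_of_pos ht, sub_re, ofReal_re, one_re, ← add_mul]
  refine mul_le_mul_of_nonneg_right ?_ (norm_nonneg _)
  rcases le_total 1 t with h | h
  · have := Real.rpow_le_rpow_of_exponent_le h (show s.re - 1 ≤ b - 1 by linarith)
    have := Real.rpow_nonneg ht.le (a-1)
    linarith
  · have := Real.rpow_le_rpow_of_exponent_ge ht h (show a - 1 ≤ s.re - 1 by linarith)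
    have := Real.rpow_nonneg ht.le (b-1)
    linarith

lemma strong_mellinConvergent {P : WeakFEPair ℂ} (hP : IsStrongFEPair P) (s : ℂ) :
    MellinConvergent P.f s :=
  let ⟨_, ht⟩ := exists_gt s.re
  let ⟨_, hu⟩ := exists_lt s.re
  mellinConvergent_of_isBigO_rpow P.hf_int (hP.hf_top _) ht (hP.hf_zero _) hu

lemma Lambda0_bound (a b : ℝ) :
    ∃ C : ℝ, 0 ≤ C ∧ ∀ s : ℂ, a ≤ s.re → s.re ≤ b → ‖completedRiemannZeta₀ s‖ ≤ C := by
  obtain ⟨C, hC, h⟩ := mellin_strip_bound (f := (HurwitzZeta.hurwitzEvenFEPair 0).f_modif)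
    (fun s => strong_mellinConvergent
      (HurwitzZeta.hurwitzEvenFEPair 0).isStrongFEPair_toStrongFEPair s)
    (a/2) (b/2)
  refine ⟨C/2, by positivity, fun s h1 h2 => ?_⟩
  have := h (s/2) (by simp; linarith) (by simp; linarith)
  have e : completedRiemannZeta₀ s = mellin (HurwitzZeta.hurwitzEvenFEPair 0).f_modif (s/2) / 2 := rfl
  rw [e, norm_div, norm_ofNat]; linarith

lemma norm_Gamma_le {s : ℂ} (hs : 0 < s.re) : ‖Complex.Gamma s‖ ≤ Real.Gamma s.re := by
  rw [Complex.Gamma_eq_integral hs, Real.Gamma_eq_integral hs, Complex.GammaIntegral]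
  refine MeasureTheory.norm_integral_le_of_norm_le (Real.GammaIntegral_convergent hs) ?_
  refine (MeasureTheory.ae_restrict_iff' measurableSet_Ioi).2 (Eventually.of_forall ?_)
  intro t (ht : 0 < t)
  rw [norm_mul, norm_cpow_eq_rpow_re_of_pos ht, norm_real, Real.norm_of_nonneg (Real.exp_pos _).le]
  simp

lemma norm_sin_le (z : ℂ) : ‖sin z‖ ≤ Real.exp |z.im| := by
  rw [Complex.sin, norm_div, norm_mul, norm_I, norm_ofNat, mul_one]
  have h1 : ‖cexp (-z * I)‖ ≤ Real.exp |z.im| := by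
    rw [norm_exp]; simp; exact le_abs_self _
  have h2 : ‖cexp (z * I)‖ ≤ Real.exp |z.im| := by
    rw [norm_exp]; simp; exact neg_le_abs _
  have := norm_sub_le (cexp (-z * I)) (cexp (z * I))
  linarith

/-- bound on 1/Gamma in a left vertical strip -/
lemma inv_Gamma_bound (a b : ℝ) (hb : b < 1) :
    ∃ C : ℝ, 0 ≤ C ∧ ∀ s : ℂ, a ≤ s.re → s.re ≤ b →
      ‖(Complex.Gamma s)⁻¹‖ ≤ C * Real.exp (Real.pi * |s.im|) := by
  have hcont : ContinuousOn (fun x : ℝ => Real.Gamma (1 - x)) (Set.Icc a b) := by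
    intro x hx
    have : DifferentiableAt ℝ Real.Gamma (1 - x) := by
      apply Real.differentiableAt_Gamma
      intro m
      have : (0:ℝ) ≤ m := m.cast_nonneg
      have := hx.2
      intro h; linarith
    have h2 : ContinuousAt (fun x : ℝ => 1 - x) x := by fun_prop
    exact (ContinuousAt.comp (f := fun x : ℝ => 1 - x) this.continuousAt h2).continuousWithinAt
  obtain ⟨C, hC⟩ := isCompact_Icc.exists_bound_of_continuousOn hcont
  refine ⟨max C 0, le_max_right _ _, fun s h1 h2 => ?_⟩
  by_cases hG : Complex.Gamma s = 0
  · rw [hG]; simp; positivity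
  by_cases hG' : Complex.Gamma (1 - s) = 0
  · exact absurd hG' (Complex.Gamma_ne_zero_of_re_pos (by simp; linarith))
  have hr := Complex.Gamma_mul_Gamma_one_sub s
  have hpi : (Real.pi : ℂ) ≠ 0 := by exact_mod_cast Real.pi_ne_zero
  have hsin : sin (Real.pi * s) ≠ 0 := by
    intro h
    rw [h] at hr
    simp [hG, hG'] at hr
  have e : (Complex.Gamma s)⁻¹ = Complex.Gamma (1 - s) * sin (Real.pi * s) / Real.pi := by
    rw [eq_div_iff hpi, inv_mul_eq_iff_eq_mul₀ hG, ← mul_assoc, hr, div_mul_cancel₀ _ hsin]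
  rw [e, norm_div, norm_mul]
  have b1 : ‖Complex.Gamma (1 - s)‖ ≤ max C 0 := by
    refine (norm_Gamma_le (by simp; linarith)).trans ?_
    have := hC s.re ⟨h1, h2⟩
    simp only [sub_re, one_re]
    exact ((le_abs_self _).trans this).trans (le_max_left _ _)
  have b2 : ‖sin (Real.pi * s)‖ ≤ Real.exp (Real.pi * |s.im|) := by
    refine (norm_sin_le _).trans ?_
    simp [abs_mul, abs_of_pos Real.pi_pos]
  have b3 : 1 ≤ ‖(Real.pi : ℂ)‖ := by
    rw [norm_real, Real.norm_of_nonneg Real.pi_pos.le]; linarith [Real.pi_gt_three]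
  calc _ ≤ ‖Complex.Gamma (1 - s)‖ * ‖sin (Real.pi * s)‖ / 1 := by gcongr
    _ ≤ _ := by rw [div_one]; gcongr


lemma zeta_norm_le : ∃ Z : ℝ, 0 ≤ Z ∧ ∀ s : ℂ, 3/2 ≤ s.re → ‖riemannZeta s‖ ≤ Z := by
  have hsum : Summable (fun n : ℕ => 1 / (n:ℝ) ^ (3/2:ℝ)) :=
    Real.summable_one_div_nat_rpow.2 (by norm_num)
  refine ⟨∑' n : ℕ, 1 / (n:ℝ) ^ (3/2:ℝ), tsum_nonneg (fun n => by positivity), fun s hs => ?_⟩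
  rw [zeta_eq_tsum_one_div_nat_cpow (by linarith)]
  refine tsum_of_norm_bounded hsum.hasSum ?_
  intro n
  rcases Nat.eq_zero_or_pos n with rfl | hn
  · have : s ≠ 0 := by rintro rfl; norm_num at hs
    simp [this]
  · rw [norm_div, norm_one, norm_natCast_cpow_of_pos hn]
    have : (1:ℝ) ≤ n := by exact_mod_cast hn
    gcongr

lemma zeta_left_edge {Z : ℝ} (hZ : ∀ s : ℂ, 3/2 ≤ s.re → ‖riemannZeta s‖ ≤ Z) {s : ℂ}
    (hs : s.re = -7/2) : ‖riemannZeta s‖ ≤ Z * ‖s + 10‖ ^ 4 := by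
  have hs0 : s ≠ 0 := by rintro rfl; norm_num at hs
  have hs1 : 1 - s ≠ 0 := by
    intro h
    have := congrArg re h
    simp [hs] at this
    norm_num at this
  have e2 : riemannZeta (1 - s) = completedRiemannZeta s / Gammaℝ (1 - s) := by
    rw [riemannZeta_def_of_ne_zero hs1, completedRiemannZeta_one_sub]
  have hG1 : Gammaℝ (1 - s) ≠ 0 := Gammaℝ_ne_zero_of_re_pos (by simp [hs]; norm_num)
  have e3 : riemannZeta s = riemannZeta (1 - s) * (Gammaℝ (1 - s) / Gammaℝ s) := by
    rw [e2, riemannZeta_def_of_ne_zero hs0]; field_simp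
  set v : ℂ := s / 2 + 2 with hv
  have hvre : v.re = 1/4 := by simp [hv, hs]; norm_num
  have hvim : v.im = s.im / 2 := by simp [hv]
  have ne1 : ∀ z : ℂ, z.re ≠ 0 → z ≠ 0 := by rintro z h rfl; simp at h
  have g1 : Complex.Gamma v = (v - 1) * ((v - 2) * Complex.Gamma (s / 2)) := by
    have a1 := Complex.Gamma_add_one (v - 1) (ne1 _ (by simp [hvre]; norm_num))
    have a2 := Complex.Gamma_add_one (v - 2) (ne1 _ (by simp [hvre]; norm_num))
    rw [show v - 1 + 1 = v by ring] at a1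
    rw [show v - 2 + 1 = v - 1 by ring] at a2
    rw [a1, a2, show v - 2 = s / 2 by rw [hv]; ring]
  have hconj : (1 - s) / 2 = starRingEnd ℂ v + 2 := by
    apply Complex.ext
    · simp [hs, hvre]; norm_num
    · simp [hvim]; ring
  set u := starRingEnd ℂ v with hu
  have hure : u.re = 1/4 := by simp [hu, hvre]
  have huim : u.im = -(s.im / 2) := by simp [hu, hvim]
  have g2 : Complex.Gamma ((1 - s) / 2) = (u + 1) * (u * Complex.Gamma u) := by
    have a1 := Complex.Gamma_add_one (u + 1) (ne1 _ (by simp [hure]; norm_num))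
    have a2 := Complex.Gamma_add_one u (ne1 _ (by simp [hure]))
    rw [hconj, show u + 2 = u + 1 + 1 by ring, a1, a2]
  have hGv : ‖Complex.Gamma u‖ = ‖Complex.Gamma v‖ := by
    rw [hu, Complex.Gamma_conj, RCLike.norm_conj]
  have hGs : Complex.Gamma (s/2) ≠ 0 := by
    intro h
    rw [h] at g1
    simp at g1
    exact Complex.Gamma_ne_zero_of_re_pos (by rw [hvre]; norm_num) g1
  have cmp : ∀ z : ℂ, |z.re| ≤ 13/2 → |z.im| ≤ |s.im| → ‖z‖ ≤ ‖s + 10‖ := by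
    intro z h1 h2
    have h3 := abs_le.1 h1
    have h4 := sq_le_sq.2 h2
    rw [← sq_le_sq₀ (norm_nonneg _) (norm_nonneg _), Complex.sq_norm, Complex.sq_norm,
      normSq_apply, normSq_apply]
    simp [hs]
    nlinarith
  have him : |s.im / 2| ≤ |s.im| := by
    rw [abs_div, abs_two]; have := abs_nonneg s.im; linarith
  have hG : ‖Gammaℝ (1 - s) / Gammaℝ s‖ ≤ ‖s + 10‖ ^ 4 := by
    have h1 : ‖Gammaℝ (1 - s)‖ ≤ ‖Gammaℝ s‖ * ‖s + 10‖ ^ 4 := by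
      rw [Gammaℝ_def, Gammaℝ_def, norm_mul, norm_mul, g2]
      have p1 : ‖(Real.pi : ℂ) ^ (-(1 - s) / 2)‖ ≤ ‖(Real.pi : ℂ) ^ (-s / 2)‖ := by
        rw [norm_cpow_eq_rpow_re_of_pos Real.pi_pos, norm_cpow_eq_rpow_re_of_pos Real.pi_pos]
        refine Real.rpow_le_rpow_of_exponent_le (by linarith [Real.pi_gt_three]) ?_
        simp [hs]; norm_num
      simp only [norm_mul]
      rw [hGv, g1]
      simp only [norm_mul]
      have q1 := cmp (u + 1) (by simp [hure]; norm_num [abs_le]) (by simpa [huim] using him)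
      have q2 := cmp u (by simp [hure]; norm_num [abs_le]) (by simpa [huim] using him)
      have q3 := cmp (v - 1) (by simp [hvre]; norm_num [abs_le]) (by simpa [hvim] using him)
      have q4 := cmp (v - 2) (by simp [hvre]; norm_num [abs_le]) (by simpa [hvim] using him)
      calc _ ≤ ‖(Real.pi : ℂ) ^ (-s / 2)‖ * (‖s+10‖ * (‖s+10‖ * (‖s+10‖ * (‖s+10‖ * ‖Complex.Gamma (s/2)‖)))) := by
            gcongr
        _ = _ := by ring
    have h0 : 0 < ‖Gammaℝ s‖ := by
      rw [norm_pos_iff, Gammaℝ_def]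
      refine mul_ne_zero ?_ hGs
      rw [Ne, cpow_eq_zero_iff]
      rintro ⟨h, -⟩
      exact Real.pi_ne_zero (by exact_mod_cast h)
    rw [norm_div, div_le_iff₀ h0]; linarith
  rw [e3, norm_mul]
  have hz := hZ (1 - s) (by simp [hs]; norm_num)
  exact mul_le_mul hz hG (norm_nonneg _) ((norm_nonneg _).trans hz)

lemma zeta_apriori : ∃ C : ℝ, 0 ≤ C ∧ ∀ s : ℂ, -7/2 ≤ s.re → s.re ≤ 3/2 → 1 ≤ |s.im| →
    ‖riemannZeta s‖ ≤ C * Real.exp (Real.pi / 2 * |s.im|) := by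
  obtain ⟨C1, hC1, h1⟩ := Lambda0_bound (-7/2) (3/2)
  obtain ⟨C2, hC2, h2⟩ := inv_Gamma_bound (-7/4) (3/4) (by norm_num)
  refine ⟨(C1 + 1 + 1) * (Real.pi * C2), by positivity, fun s ha hb hi => ?_⟩
  have hs0 : s ≠ 0 := by rintro rfl; norm_num at hi
  have n1 : ‖(1:ℂ) / s‖ ≤ 1 := by
    rw [norm_div, norm_one]
    exact div_le_one_of_le₀ (hi.trans (abs_im_le_norm _)) (norm_nonneg _)
  have n2 : ‖(1:ℂ) / (1 - s)‖ ≤ 1 := by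
    rw [norm_div, norm_one]
    refine div_le_one_of_le₀ (le_trans ?_ (abs_im_le_norm _)) (norm_nonneg _)
    simpa using hi
  have n3 := h2 (s/2) (by simp; linarith) (by simp; linarith)
  have n4 : ‖((Real.pi : ℂ) ^ (-s / 2))⁻¹‖ ≤ Real.pi := by
    rw [← cpow_neg, norm_cpow_eq_rpow_re_of_pos Real.pi_pos]
    calc _ ≤ Real.pi ^ (1:ℝ) := by
          refine Real.rpow_le_rpow_of_exponent_le (by linarith [Real.pi_gt_three]) ?_
          simp; linarith
      _ = _ := by simp
  have n5 : ‖completedRiemannZeta₀ s - 1 / s - 1 / (1 - s)‖ ≤ C1 + 1 + 1 :=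
    (norm_sub_le _ _).trans (add_le_add ((norm_sub_le _ _).trans (add_le_add (h1 s ha hb) n1)) n2)
  rw [riemannZeta_eq_completedRiemannZeta₀ hs0, div_eq_mul_inv, mul_inv, norm_mul, norm_mul, mul_assoc, mul_assoc]
  have e : Real.pi * |(s/2).im| = Real.pi / 2 * |s.im| := by simp [abs_div]; ring
  rw [e] at n3
  gcongr

lemma zeta_growth : ∃ Z : ℝ, 0 ≤ Z ∧ ∀ s : ℂ, -7/2 ≤ s.re → 1 ≤ |s.im| →
    ‖riemannZeta s‖ ≤ Z * ‖s + 10‖ ^ 5 := by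
  obtain ⟨Z, hZ0, hZ⟩ := zeta_norm_le
  obtain ⟨C, hC0, hC⟩ := zeta_apriori
  refine ⟨Z, hZ0, ?_⟩
  set G : ℂ → ℂ := fun s => (s * (s - 1) * completedRiemannZeta₀ s + 1) * (Real.pi : ℂ) ^ (s / 2) *
    (Complex.Gamma (s / 2 + 1))⁻¹ / (2 * (s + 10) ^ 5) with hG
  have hten : ∀ s : ℂ, -7/2 ≤ s.re → 1 ≤ ‖s + 10‖ := by
    intro s hs
    have := (le_abs_self _).trans (abs_re_le_norm (s + 10))
    simp at this; linarith
  have hten0 : ∀ s : ℂ, -7/2 ≤ s.re → s + 10 ≠ 0 := by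
    intro s hs h
    have := hten s hs
    rw [h] at this; simp at this; linarith
  have hGz : ∀ s : ℂ, s ≠ 1 → G s = (s - 1) * riemannZeta s / (s + 10) ^ 5 := by
    intro s hs
    have h1 : 1 - s ≠ 0 := sub_ne_zero.2 hs.symm
    have e1 : (Real.pi : ℂ) ^ (s / 2) = ((Real.pi : ℂ) ^ (-s / 2))⁻¹ := by
      rw [← cpow_neg]; congr 1; ring
    have e2 : s * (s - 1) * completedRiemannZeta₀ s + 1
        = (s - 1) * (s * completedRiemannZeta₀ s - 1 - s / (1 - s)) := by
      field_simp; ring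
    rw [riemannZeta_eq_mul_completedRiemannZeta₀]
    simp only [hG]
    rw [e1, e2]
    simp only [div_eq_mul_inv, mul_inv]
    ring
  have hle : ∀ s : ℂ, -7/2 ≤ s.re → ‖s - 1‖ ≤ ‖s + 10‖ := by
    intro s hs
    rw [← sq_le_sq₀ (norm_nonneg _) (norm_nonneg _), Complex.sq_norm, Complex.sq_norm,
      normSq_apply, normSq_apply]
    simp
    nlinarith
  have hcl : closure (re ⁻¹' Set.Ioo (-7/2 : ℝ) (3/2)) ⊆ re ⁻¹' Set.Icc (-7/2 : ℝ) (3/2) :=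
    closure_minimal (Set.preimage_mono Set.Ioo_subset_Icc_self)
      (isClosed_Icc.preimage continuous_re)
  have hpi : (Real.pi : ℂ) ≠ 0 := by exact_mod_cast Real.pi_ne_zero
  have hGd : DiffContOnCl ℂ G (re ⁻¹' Set.Ioo (-7/2 : ℝ) (3/2)) := by
    apply DifferentiableOn.diffContOnCl
    intro s hs
    have hs' := hcl hs
    refine DifferentiableAt.differentiableWithinAt ?_
    have d1 : DifferentiableAt ℂ (fun s : ℂ => (Complex.Gamma (s / 2 + 1))⁻¹) s :=
      (differentiable_one_div_Gamma (s/2+1)).comp s (f := fun s : ℂ => s / 2 + 1) (by fun_prop)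
    have d2 : DifferentiableAt ℂ (fun s : ℂ => (Real.pi : ℂ) ^ (s / 2)) s :=
      DifferentiableAt.const_cpow (by fun_prop) (Or.inl hpi)
    have d3 := differentiable_completedZeta₀ s
    refine DifferentiableAt.div ?_ (by fun_prop) ?_
    · exact ((((differentiableAt_id.mul (differentiableAt_id.sub_const 1)).mul d3).add_const 1).mul d2).mul d1
    · exact mul_ne_zero two_ne_zero (pow_ne_zero _ (hten0 s hs'.1))
  have hGle : ∀ s : ℂ, -7/2 ≤ s.re → s ≠ 1 → ‖G s‖ * ‖s + 10‖ ^ 4 ≤ ‖riemannZeta s‖ := by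
    intro s hs h1
    have ht := hten s hs
    rw [hGz s h1, norm_div, norm_mul, norm_pow]
    have : ‖s - 1‖ * ‖riemannZeta s‖ / ‖s + 10‖ ^ 5 * ‖s + 10‖ ^ 4 = (‖s - 1‖ / ‖s + 10‖) * ‖riemannZeta s‖ := by
      field_simp
    rw [this]
    exact mul_le_of_le_one_left (norm_nonneg _) (div_le_one_of_le₀ (hle s hs) (norm_nonneg _))
  have hGle' : ∀ s : ℂ, -7/2 ≤ s.re → s ≠ 1 → ‖G s‖ ≤ ‖riemannZeta s‖ := by
    intro s hs h1
    refine le_trans ?_ (hGle s hs h1)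
    exact le_mul_of_one_le_right (norm_nonneg _) (one_le_pow₀ (hten s hs))
  have hGb : ∀ s : ℂ, -7/2 ≤ s.re → s.re ≤ 3/2 → ‖G s‖ ≤ Z := by
    intro s h1 h2
    refine PhragmenLindelof.vertical_strip hGd ?_ ?_ ?_ h1 h2
    · refine ⟨1/2, ?_, Real.pi, ?_⟩
      · rw [lt_div_iff₀ (by norm_num)]; linarith [Real.pi_gt_three]
      · refine Asymptotics.IsBigO.of_bound C ?_
        have hev : ∀ᶠ z : ℂ in comap (abs ∘ im) atTop, 1 ≤ |z.im| :=
          (eventually_ge_atTop (1:ℝ)).comap (abs ∘ im)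
        filter_upwards [hev.filter_mono inf_le_left, mem_inf_of_right (mem_principal_self _)] with z hz hz2
        have hz3 : -7/2 < z.re ∧ z.re < 3/2 := hz2
        have hz1 : z ≠ 1 := by rintro rfl; norm_num at hz
        refine (hGle' z hz3.1.le hz1).trans ((hC z hz3.1.le hz3.2.le hz).trans ?_)
        rw [Real.norm_of_nonneg (Real.exp_pos _).le]
        refine mul_le_mul_of_nonneg_left (Real.exp_le_exp.2 ?_) hC0
        have := Real.add_one_le_exp (1/2 * |z.im|)
        nlinarith [Real.pi_pos]
    · intro z hz
      have hz1 : z ≠ 1 := by rintro rfl; norm_num at hz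
      have a1 := hGle z hz.ge hz1
      have a2 := zeta_left_edge hZ hz
      have a3 : 0 < ‖z + 10‖ ^ 4 := pow_pos (lt_of_lt_of_le one_pos (hten z hz.ge)) 4
      exact le_of_mul_le_mul_right (a1.trans a2) a3
    · intro z hz
      have hz1 : z ≠ 1 := by rintro rfl; norm_num at hz
      exact (hGle' z (by rw [hz]; norm_num) hz1).trans (hZ z hz.ge)
  intro s h1 h2
  have ht := hten s h1
  rcases le_total s.re (3/2) with h | h
  · have hs1 : s ≠ 1 := by rintro rfl; norm_num at h2
    have hb := hGb s h1 h
    rw [hGz s hs1, norm_div, norm_mul, norm_pow, div_le_iff₀ (by positivity)] at hb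
    refine le_trans ?_ hb
    refine le_mul_of_one_le_left (norm_nonneg _) (h2.trans ?_)
    have := abs_im_le_norm (s - 1)
    simpa using this
  · exact (hZ s h).trans (le_mul_of_one_le_right hZ0 (one_le_pow₀ ht))


lemma zeta_lower {s : ℂ} (hs : s.re = 2) : 1/4 ≤ ‖riemannZeta s‖ := by
  have h := zeta_eq_tsum_one_div_nat_cpow (s := s) (by rw [hs]; norm_num)
  have hn : ∀ n : ℕ, ‖1 / (n:ℂ) ^ s‖ = 1 / (n:ℝ) ^ 2 := by
    intro n
    rcases Nat.eq_zero_or_pos n with rfl | hn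
    · have : s ≠ 0 := by rintro rfl; norm_num at hs
      simp [zero_cpow this]
    · rw [norm_div, norm_one, Complex.norm_natCast_cpow_of_pos hn, hs]
      norm_num
  have hs2 := hasSum_zeta_two
  have hsum : Summable (fun n : ℕ => 1 / (n:ℂ) ^ s) := by
    apply Summable.of_norm
    simp_rw [hn]
    exact hs2.summable
  have h1 := hsum.sum_add_tsum_nat_add 2
  have h2 := hs2.summable.sum_add_tsum_nat_add 2
  rw [hs2.tsum_eq] at h2
  rw [← h] at h1
  have hs0 : s ≠ 0 := by rintro rfl; norm_num at hs
  simp [Finset.sum_range_succ, zero_cpow hs0] at h1 h2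
  have h3 : ‖∑' n : ℕ, (((n:ℂ) + 2) ^ s)⁻¹‖ ≤ ∑' n : ℕ, (((n:ℝ) + 2) ^ 2)⁻¹ := by
    have hsh : Summable (fun n : ℕ => (((n:ℝ) + 2) ^ 2)⁻¹) := by
      have := (summable_nat_add_iff 2).2 hs2.summable
      simpa using this
    refine tsum_of_norm_bounded hsh.hasSum ?_
    intro n
    have := hn (n + 2)
    simp at this
    rw [norm_inv]
    simp [this]
  have h4 : ‖(1:ℂ)‖ ≤ ‖riemannZeta s‖ + ‖∑' n : ℕ, (((n:ℂ) + 2) ^ s)⁻¹‖ := by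
    have : (1:ℂ) = riemannZeta s - ∑' n : ℕ, (((n:ℂ) + 2) ^ s)⁻¹ := by rw [← h1]; ring
    calc ‖(1:ℂ)‖ = ‖riemannZeta s - ∑' n : ℕ, (((n:ℂ) + 2) ^ s)⁻¹‖ := by rw [← this]
      _ ≤ _ := norm_sub_le _ _
  rw [norm_one] at h4
  have hp := Real.pi_lt_d2
  have hp0 := Real.pi_pos
  nlinarith

lemma zero_nontrivial {ρ : ℂ} (h : riemannZeta ρ = 0) (hi : ρ.im ≠ 0) : IsNontrivialZero ρ := by
  have h1 : ρ.re < 1 := by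
    by_contra hc
    exact riemannZeta_ne_zero_of_one_le_re (not_lt.1 hc) h
  refine ⟨h, ?_, h1⟩
  by_contra hc
  have hr : ρ ≠ 0 := by rintro rfl; simp at hi
  have hr1 : 1 - ρ ≠ 0 := by
    intro h0
    have := congrArg im h0
    simp at this; exact hi this
  have hG : Gammaℝ ρ ≠ 0 := by
    intro h0
    obtain ⟨n, hn⟩ := Gammaℝ_eq_zero_iff.1 h0
    apply hi
    rw [hn]; simp
  rw [riemannZeta_def_of_ne_zero hr, div_eq_zero_iff] at h
  have hL := h.resolve_right hG
  have h2 : riemannZeta (1 - ρ) ≠ 0 :=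
    riemannZeta_ne_zero_of_one_le_re (by simp; linarith)
  apply h2
  rw [riemannZeta_def_of_ne_zero hr1, completedRiemannZeta_one_sub, hL, zero_div]

lemma logderiv_local {Z : ℝ} (hZ0 : 0 ≤ Z) (hZ : ∀ s : ℂ, -7/2 ≤ s.re → 1 ≤ |s.im| →
    ‖riemannZeta s‖ ≤ Z * ‖s + 10‖ ^ 5) {T d : ℝ} (hT : 100 ≤ T) (hTZ : 32 * Z ≤ T)
    (hd : 0 < d) (hd1 : d ≤ 1) (had : ∀ ρ : ℂ, IsNontrivialZero ρ → d ≤ |T - ρ.im|) {w : ℂ}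
    (hw : ‖w - (2 + T * I)‖ ≤ 7/2) (hwi : |w.im - T| ≤ d / 2) :
    ‖deriv riemannZeta w / riemannZeta w‖ ≤ 262 * (6 * Real.log T) / (d / 2) := by
  set c : ℂ := 2 + T * I with hc
  have hcre : c.re = 2 := by simp [hc]
  have hcim : c.im = T := by simp [hc]
  have hT0 : 0 < T := by linarith
  have hlog : 1 ≤ Real.log T := by
    rw [Real.le_log_iff_exp_le hT0]
    linarith [Real.exp_one_lt_d9]
  have hexp : Real.exp (6 * Real.log T) = T ^ 6 := by
    rw [show (6:ℝ) = ((6:ℕ):ℝ) by norm_num, Real.exp_nat_mul, Real.exp_log hT0]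
  have hcoord : ∀ z : ℂ, ∀ r : ℝ, ‖z‖ ≤ r → 2 - r ≤ (z + c).re ∧ T - r ≤ (z + c).im := by
    intro z r hz
    have a1 := (abs_le.1 ((abs_re_le_norm z).trans hz)).1
    have a2 := (abs_le.1 ((abs_im_le_norm z).trans hz)).1
    rw [add_re, add_im, hcre, hcim]
    constructor <;> linarith
  have key := landau (f := fun z => riemannZeta (z + c)) (M := 6 * Real.log T) (d := d / 2)
    (w := w - c) (by linarith) (by linarith) (by linarith) hw ?_ ?_ ?_ ?_
  · rw [deriv_comp_add_const] at key
    simpa using key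
  · intro z hz
    have hz' : ‖z‖ ≤ 6 := by
      have := Metric.mem_ball.1 hz
      rw [dist_zero_right] at this; exact this.le
    have h1 : z + c ≠ 1 := by
      intro h
      have := (hcoord z 6 hz').2
      rw [h] at this; simp at this; linarith
    exact ((differentiableAt_riemannZeta h1).comp z (f := fun z => z + c)
      (by fun_prop)).differentiableWithinAt
  · intro z hz
    have hz' : ‖z‖ ≤ 5 := by
      have := Metric.mem_closedBall.1 hz
      rwa [dist_zero_right] at this
    obtain ⟨h1, h2⟩ := hcoord z 5 hz'
    refine (hZ (z + c) (by linarith) ((by linarith : (1:ℝ) ≤ (z + c).im).trans (le_abs_self _))).trans ?_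
    have h3 : ‖z + c + 10‖ ≤ 2 * T := by
      have e : z + c + 10 = z + (12 + T * I) := by rw [hc]; ring
      have h5 : ‖(12:ℂ) + T * I‖ ≤ 12 + T := by
        refine (norm_add_le _ _).trans ?_
        simp [abs_of_pos hT0]
      rw [e]
      have := norm_add_le z (12 + T * I)
      linarith
    rw [hexp]
    calc Z * ‖z + c + 10‖ ^ 5 ≤ Z * (2 * T) ^ 5 := by gcongr
      _ = (32 * Z) * T ^ 5 := by ring
      _ ≤ T * T ^ 5 := by gcongr
      _ = T ^ 6 := by ring
  · rw [Real.exp_neg, hexp]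
    simp only [zero_add]
    refine le_trans ?_ (zeta_lower hcre)
    rw [one_div]
    apply inv_anti₀ (by norm_num)
    have : (100:ℝ) ^ 6 ≤ T ^ 6 := by gcongr
    linarith [show (4:ℝ) ≤ 100 ^ 6 by norm_num]
  · intro ρ hρ h0
    have hz' : ‖ρ‖ ≤ 4 := by
      have := Metric.mem_ball.1 hρ
      rw [dist_zero_right] at this; exact this.le
    have h2 := (hcoord ρ 4 hz').2
    have h3 := had _ (zero_nontrivial h0 (by linarith))
    have h4 := abs_im_le_norm (w - c - ρ)
    have h5 : (w - c - ρ).im = w.im - (ρ + c).im := by simp; ring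
    rw [h5] at h4
    have h6 := abs_sub_le T w.im (ρ + c).im
    rw [abs_sub_comm T w.im] at h6
    linarith

/-- after Gonek: if `T` is admissible then, uniformly for
`-1 ≤ σ ≤ 2`, the `n`-th derivative of `ζ'/ζ` satisfies
`(ζ'/ζ)^{(n)}(σ + iT) ≪ log^{n+2} T`, with implied constant depending only
on `n` and `δ`. -/
theorem log_deriv_zeta_bound (n : ℕ) (δ : ℝ) (hδ : 0 < δ) :
    ∃ K > (0 : ℝ), ∃ T₀ : ℝ, ∀ T ≥ T₀, AdmissibleHeight δ T →
      ∀ σ : ℝ, -1 ≤ σ → σ ≤ 2 →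
        ‖iteratedDeriv n (fun s => deriv riemannZeta s / riemannZeta s)
            (↑σ + ↑T * I)‖ ≤ K * Real.log T ^ (n + 2) := by
  obtain ⟨Z, hZ0, hZ⟩ := zeta_growth
  refine ⟨n.factorial * (3144 / δ) * (2 / δ) ^ n, by positivity,
    max 100 (max (32 * Z) (Real.exp δ)), ?_⟩
  intro T hT had σ hσ1 hσ2
  have hT1 : 100 ≤ T := (le_max_left _ _).trans hT
  have hT2 : 32 * Z ≤ T := ((le_max_left _ _).trans (le_max_right _ _)).trans hT
  have hT3 : Real.exp δ ≤ T := ((le_max_right _ _).trans (le_max_right _ _)).trans hT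
  have hT0 : 0 < T := by linarith
  have hL : δ ≤ Real.log T := (Real.le_log_iff_exp_le hT0).2 hT3
  have hL0 : 0 < Real.log T := hδ.trans_le hL
  set L := Real.log T with hLdef
  set d := δ / L with hd
  have hd0 : 0 < d := by positivity
  have hd1 : d ≤ 1 := div_le_one_of_le₀ hL hL0.le
  set z : ℂ := ↑σ + ↑T * I with hz
  have hzim : z.im = T := by simp [hz]
  have hwi : ∀ w ∈ Metric.closedBall z (d / 2), |w.im - T| ≤ d / 2 := by
    intro w hw
    rw [mem_closedBall_iff_norm] at hw
    have := abs_im_le_norm (w - z)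
    rw [sub_im, hzim] at this
    exact this.trans hw
  have hcc : ∀ w ∈ Metric.closedBall z (d / 2), w ≠ 1 ∧ riemannZeta w ≠ 0 := by
    intro w hw
    have h1 := hwi w hw
    have h2 : 0 < w.im := by
      have := (abs_le.1 h1).1
      linarith
    constructor
    · rintro rfl; simp at h2
    · intro h0
      have h3 : d ≤ |T - w.im| := had w (zero_nontrivial h0 h2.ne')
      rw [abs_sub_comm] at h3
      linarith
  have hbd : ∀ w ∈ Metric.sphere z (d / 2),
      ‖deriv riemannZeta w / riemannZeta w‖ ≤ 262 * (6 * L) / (d / 2) := by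
    intro w hw
    have hw' := Metric.sphere_subset_closedBall hw
    refine logderiv_local hZ0 hZ hT1 hT2 hd0 hd1 had ?_ (hwi w hw')
    rw [mem_closedBall_iff_norm] at hw'
    have e : w - (2 + T * I) = (w - z) + ((σ - 2 : ℝ) : ℂ) := by rw [hz]; push_cast; ring
    rw [e]
    refine (norm_add_le _ _).trans ?_
    rw [Complex.norm_real, Real.norm_eq_abs, abs_of_nonpos (by linarith)]
    linarith
  have hdiff : DiffContOnCl ℂ (fun s => deriv riemannZeta s / riemannZeta s)
      (Metric.ball z (d / 2)) := by
    apply DifferentiableOn.diffContOnCl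
    rw [closure_ball z (by positivity)]
    intro w hw
    obtain ⟨h1, h2⟩ := hcc w hw
    have hderiv : DifferentiableAt ℂ (deriv riemannZeta) w :=
      (differentiableOn_riemannZeta.deriv isOpen_compl_singleton).differentiableAt
        (isOpen_compl_singleton.mem_nhds h1)
    exact (hderiv.div (differentiableAt_riemannZeta h1) h2).differentiableWithinAt
  have hfin := Complex.norm_iteratedDeriv_le_of_forall_mem_sphere_norm_le n
    (by positivity : 0 < d / 2) hdiff hbd
  refine hfin.trans (le_of_eq ?_)
  rw [hd]
  simp only [div_pow, pow_add]
  field_simp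
  ring
end

section
/- Fix an integer n ≥ 1 and set c = 1 + 1/log(2πY). For 2 ≤ V ≤ Y, as Y → ∞, (−1)^{n+1} ∑_{mr ≤ Y} Λ(r) log^n r = (1/2π) ∫_{−V}^{V} (ζ'/ζ)^{(n)}(c + it) · ζ(c + it) · Y^{c+it}/(c + it) dt + R(Y, V), where R(Y, V) ≪ (Y/V) log^{n+2} Y and the sum runs over all ordered pairs (m, r) of positive integers with mr ≤ Y. -/
open Complex Finset

/-- `∑_{mr ≤ Y} Λ(r) log^n r`, summed over all ordered pairs `(m, r)` of
positive integers with `mr ≤ Y`. -/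
noncomputable def vonMangoldtPairSum (n : ℕ) (Y : ℝ) : ℝ :=
  ∑ p ∈ (Finset.Icc 1 ⌊Y⌋₊ ×ˢ Finset.Icc 1 ⌊Y⌋₊).filter
      (fun p : ℕ × ℕ => ((p.1 : ℝ) * (p.2 : ℝ) ≤ Y)),
    ArithmeticFunction.vonMangoldt p.2 * Real.log p.2 ^ n

/-- The vertical line integral
`(1/2πi) ∫_{c-iV}^{c+iV} (ζ'/ζ)^{(n)}(s) ζ(s) Y^s / s ds`, written as a real
integral in `t`. -/
noncomputable def perronIntegral (n : ℕ) (c V Y : ℝ) : ℂ :=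
  ((1 / (2 * Real.pi) : ℝ) : ℂ) *
    ∫ t in -V..V,
      iteratedDeriv n (fun s => deriv riemannZeta s / riemannZeta s) (↑c + ↑t * I) *
        riemannZeta (↑c + ↑t * I) * (Y : ℂ) ^ (↑c + ↑t * I) / (↑c + ↑t * I)

/-- kernel -/
noncomputable def kerF (c V L : ℝ) : ℂ :=
  ∫ t in -V..V, Complex.exp ((↑c + ↑t * I) * (L : ℂ)) / (↑c + ↑t * I)

lemma norm_exp_ker (x t L : ℝ) : ‖Complex.exp (((x : ℂ) + ↑t * I) * (L : ℂ))‖ = Real.exp (x * L) := by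
  rw [Complex.norm_exp]; simp

lemma abs_im_le_norm' (x t : ℝ) : |t| ≤ ‖(x : ℂ) + ↑t * I‖ := by
  simpa using Complex.abs_im_le_norm ((x : ℂ) + ↑t * I)

lemma abs_re_le_norm' (x t : ℝ) : |x| ≤ ‖(x : ℂ) + ↑t * I‖ := by
  simpa using Complex.abs_re_le_norm ((x : ℂ) + ↑t * I)

lemma ne_zero_of_re (x t : ℝ) (hx : x ≠ 0) : (x : ℂ) + ↑t * I ≠ 0 := by
  intro h; apply hx; simpa using congrArg Complex.re h

lemma ne_zero_of_im (x t : ℝ) (ht : t ≠ 0) : (x : ℂ) + ↑t * I ≠ 0 := by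
  intro h; apply ht; simpa using congrArg Complex.im h

lemma norm_ker_le (x t L : ℝ) (ht : t ≠ 0) :
    ‖Complex.exp (((x : ℂ) + ↑t * I) * (L : ℂ)) / ((x : ℂ) + ↑t * I)‖ ≤ Real.exp (x * L) / |t| := by
  rw [norm_div, norm_exp_ker]
  exact div_le_div_of_nonneg_left (Real.exp_pos _).le (abs_pos.2 ht) (abs_im_le_norm' x t)

lemma integral_exp_mul (a b L : ℝ) (hL : L ≠ 0) :
    ∫ x in a..b, Real.exp (x * L) = (Real.exp (b * L) - Real.exp (a * L)) / L := by
  rw [intervalIntegral.integral_comp_mul_right (fun x => Real.exp x) hL, integral_exp]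
  simp; field_simp

lemma horiz_le (a b t L : ℝ) (hab : a ≤ b) (ht : t ≠ 0) (hL : L ≠ 0) :
    ‖∫ x in a..b, Complex.exp (((x : ℂ) + ↑t * I) * (L : ℂ)) / ((x : ℂ) + ↑t * I)‖ ≤
      (Real.exp (b * L) - Real.exp (a * L)) / L / |t| := by
  have := intervalIntegral.norm_integral_le_of_norm_le (μ := MeasureTheory.volume) hab
    (f := fun x : ℝ => Complex.exp (((x : ℂ) + ↑t * I) * (L : ℂ)) / ((x : ℂ) + ↑t * I))
    (g := fun x : ℝ => Real.exp (x * L) / |t|)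
    (Filter.Eventually.of_forall fun x _ => norm_ker_le x t L ht)
    (Continuous.intervalIntegrable (by fun_prop) _ _)
  rwa [intervalIntegral.integral_div, integral_exp_mul a b L hL] at this

lemma kerF_neg_aux (c A V L : ℝ) (hc : 0 < c) (hcA : c ≤ A) (hV : 0 < V) (hL : L < 0) :
    ‖kerF c V L‖ ≤ 2 * Real.exp (c * L) / (V * (-L)) + 2 * V * Real.exp (A * L) / c := by
  have hA : 0 < A := hc.trans_le hcA
  have hr := integral_boundary_rect_eq_zero_of_differentiableOn
    (fun s : ℂ => Complex.exp (s * L) / s) (c + (-V : ℝ) * I) (A + V * I) (by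
      intro s hs
      have h1 : s.re ∈ Set.uIcc c A := by simpa using hs.1
      rw [Set.uIcc_of_le hcA] at h1
      have : s ≠ 0 := by
        rintro rfl
        simp at h1; linarith
      apply DifferentiableAt.differentiableWithinAt
      fun_prop (disch := assumption))
  simp only [add_re, ofReal_re, mul_re, I_re, mul_zero, ofReal_im, I_im, mul_one, sub_self,
    add_zero, add_im, mul_im, zero_add, smul_eq_mul] at hr
  have e1 := horiz_le c A (-V) L hcA (by linarith) hL.ne
  have e2 := horiz_le c A V L hcA (by linarith) hL.ne
  have e3 : ‖∫ t in -V..V, Complex.exp ((↑A + ↑t * I) * (L : ℂ)) / (↑A + ↑t * I)‖ ≤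
      Real.exp (A * L) / c * |V - -V| := by
    apply intervalIntegral.norm_integral_le_of_norm_le_const
    intro t _
    rw [norm_div, norm_exp_ker]
    refine div_le_div_of_nonneg_left (Real.exp_pos _).le hc ?_
    exact (hcA.trans (le_abs_self A)).trans (abs_re_le_norm' A t)
  have hk : I * kerF c V L = (∫ x in c..A, Complex.exp (((x : ℂ) + ((-V : ℝ) : ℂ) * I) * (L : ℂ)) / ((x : ℂ) + ((-V : ℝ) : ℂ) * I))
     - (∫ x in c..A, Complex.exp (((x : ℂ) + ↑V * I) * (L : ℂ)) / ((x : ℂ) + ↑V * I))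
     + I * (∫ t in -V..V, Complex.exp ((↑A + ↑t * I) * (L : ℂ)) / (↑A + ↑t * I)) := by
    rw [kerF]; linear_combination -hr
  have hn : ‖kerF c V L‖ = ‖I * kerF c V L‖ := by simp
  rw [hn, hk]
  refine (norm_add_le _ _).trans ?_
  rw [norm_mul, norm_I, one_mul]
  refine (add_le_add (norm_sub_le _ _) le_rfl).trans ?_
  refine (add_le_add (add_le_add e1 e2) e3).trans ?_
  rw [abs_neg, abs_of_pos hV, abs_of_pos (by linarith : 0 < V - -V)]
  have : (Real.exp (A * L) - Real.exp (c * L)) / L / V ≤ Real.exp (c * L) / (V * (-L)) := by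
    rw [div_div, ← neg_div_neg_eq, show -(L * V) = V * (-L) by ring]
    have : 0 < V * (-L) := by nlinarith
    gcongr
    have := Real.exp_pos (A * L)
    linarith
  have h4 : Real.exp (A * L) / c * (V - -V) = 2 * V * Real.exp (A * L) / c := by ring
  rw [h4]
  have h5 : 2 * Real.exp (c * L) / (V * (-L)) = Real.exp (c * L) / (V * (-L)) + Real.exp (c * L) / (V * (-L)) := by ring
  rw [h5]
  linarith

lemma kerF_neg (c V L : ℝ) (hc : 0 < c) (hV : 0 < V) (hL : L < 0) :
    ‖kerF c V L‖ ≤ 2 * Real.exp (c * L) / (V * (-L)) := by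
  have h : Filter.Tendsto (fun A : ℝ => 2 * Real.exp (c * L) / (V * (-L)) + 2 * V * Real.exp (A * L) / c)
      Filter.atTop (nhds (2 * Real.exp (c * L) / (V * (-L)) + 2 * V * 0 / c)) := by
    refine Filter.Tendsto.const_add _ (Filter.Tendsto.div_const (Filter.Tendsto.const_mul _ ?_) _)
    apply Real.tendsto_exp_atBot.comp
    exact Filter.tendsto_id.atTop_mul_const_of_neg hL
  simp only [mul_zero, zero_div, add_zero] at h
  refine ge_of_tendsto h ?_
  filter_upwards [Filter.eventually_ge_atTop c] with A hA
  exact kerF_neg_aux c A V L hc hA hV hL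

lemma kerF_neg_re (c V L : ℝ) : kerF (-c) V L = - kerF c V (-L) := by
  have := intervalIntegral.integral_comp_neg (a := -V) (b := V)
    (fun t : ℝ => Complex.exp ((((-c : ℝ) : ℂ) + ↑t * I) * (L : ℂ)) / (((-c : ℝ) : ℂ) + ↑t * I))
  rw [neg_neg] at this
  rw [kerF, kerF, ← this, ← intervalIntegral.integral_neg]
  congr 1; ext t
  rw [show (((-c : ℝ) : ℂ) + ((-t : ℝ) : ℂ) * I) = -((c : ℂ) + t * I) by push_cast; ring]
  rw [div_neg]; push_cast; ring_nf

lemma integral_cauchy (c V : ℝ) (hc : 0 < c) :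
    ∫ t in -V..V, ((2 * c / (c ^ 2 + t ^ 2) : ℝ) : ℂ) = ((4 * Real.arctan (V / c) : ℝ) : ℂ) := by
  rw [intervalIntegral.integral_ofReal]
  congr 1
  simp only [mul_div_assoc, intervalIntegral.integral_const_mul]
  rw [integral_div_sq_add_sq, neg_div, Real.arctan_neg]; ring

lemma kerF_pos (c V L : ℝ) (hc : 0 < c) (hV : 0 < V) (hL : 0 < L) :
    ‖kerF c V L - 2 * Real.pi‖ ≤ 4 * Real.exp (c * L) / (V * L) := by
  set h : ℂ → ℂ := dslope (fun s : ℂ => Complex.exp (s * L)) 0 with hh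
  have hd : DifferentiableOn ℂ h Set.univ := by
    rw [hh, Complex.differentiableOn_dslope Filter.univ_mem]
    apply Differentiable.differentiableOn
    fun_prop
  have hval : ∀ s : ℂ, s ≠ 0 → h s = Complex.exp (s * L) / s - 1 / s := by
    intro s hs
    rw [hh, dslope_of_ne _ hs, slope_def_field]
    simp [sub_div]
  have hr := integral_boundary_rect_eq_zero_of_differentiableOn h
    (((-c : ℝ) : ℂ) + (-V : ℝ) * I) (c + V * I) (hd.mono (Set.subset_univ _))
  simp only [add_re, ofReal_re, mul_re, I_re, mul_zero, ofReal_im, I_im, mul_one, sub_self,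
    add_zero, add_im, mul_im, zero_add, smul_eq_mul] at hr
  have cH : ∀ t : ℝ, t ≠ 0 → Continuous fun x : ℝ =>
      Complex.exp (((x : ℂ) + ↑t * I) * (L : ℂ)) / ((x : ℂ) + ↑t * I) := fun t ht =>
    Continuous.div (by fun_prop) (by fun_prop) fun x => ne_zero_of_im x t ht
  have cH1 : ∀ t : ℝ, t ≠ 0 → Continuous fun x : ℝ => 1 / ((x : ℂ) + ↑t * I) := fun t ht =>
    Continuous.div (by fun_prop) (by fun_prop) fun x => ne_zero_of_im x t ht
  have cV : ∀ x : ℝ, x ≠ 0 → Continuous fun t : ℝ =>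
      Complex.exp (((x : ℂ) + ↑t * I) * (L : ℂ)) / ((x : ℂ) + ↑t * I) := fun x hx =>
    Continuous.div (by fun_prop) (by fun_prop) fun t => ne_zero_of_re x t hx
  have cV1 : ∀ x : ℝ, x ≠ 0 → Continuous fun t : ℝ => 1 / ((x : ℂ) + ↑t * I) := fun x hx =>
    Continuous.div (by fun_prop) (by fun_prop) fun t => ne_zero_of_re x t hx
  have sH : ∀ t : ℝ, t ≠ 0 → ∫ x in -c..c, h ((x : ℂ) + t * I) =
      (∫ x in -c..c, Complex.exp (((x : ℂ) + ↑t * I) * (L : ℂ)) / ((x : ℂ) + ↑t * I)) -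
      ∫ x in -c..c, 1 / ((x : ℂ) + ↑t * I) := fun t ht => by
    rw [← intervalIntegral.integral_sub ((cH t ht).intervalIntegrable _ _) ((cH1 t ht).intervalIntegrable _ _)]
    congr 1; ext x; exact hval _ (ne_zero_of_im x t ht)
  have sV : ∀ x : ℝ, x ≠ 0 → ∫ t in -V..V, h ((x : ℂ) + t * I) =
      kerF x V L - ∫ t in -V..V, 1 / ((x : ℂ) + ↑t * I) := fun x hx => by
    rw [kerF, ← intervalIntegral.integral_sub ((cV x hx).intervalIntegrable _ _) ((cV1 x hx).intervalIntegrable _ _)]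
    congr 1; ext t; exact hval _ (ne_zero_of_re x t hx)
  have hV' : V ≠ 0 := hV.ne'
  have hc' : c ≠ 0 := hc.ne'
  rw [sH _ hV', sH _ (neg_ne_zero.2 hV'), sV _ hc', sV _ (neg_ne_zero.2 hc'), kerF_neg_re] at hr
  have i1 : (∫ t in -V..V, 1 / ((c : ℂ) + ↑t * I)) - (∫ t in -V..V, 1 / (((-c : ℝ) : ℂ) + ↑t * I))
      = ((4 * Real.arctan (V / c) : ℝ) : ℂ) := by
    rw [← intervalIntegral.integral_sub ((cV1 c hc').intervalIntegrable _ _)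
      ((cV1 _ (neg_ne_zero.2 hc')).intervalIntegrable _ _), ← integral_cauchy c V hc]
    congr 1; ext t
    have a1 := ne_zero_of_re c t hc'
    have a2 := ne_zero_of_re (-c) t (neg_ne_zero.2 hc')
    have a3 : ((c : ℂ) ^ 2 + (t : ℂ) ^ 2) ≠ 0 := by
      have : c ^ 2 + t ^ 2 ≠ 0 := by positivity
      exact_mod_cast this
    rw [div_sub_div _ _ a1 a2]
    push_cast at a2 ⊢
    rw [div_eq_div_iff (mul_ne_zero a1 a2) a3]
    ring_nf
    rw [I_sq]; ring
  have i2 : (∫ x in -c..c, 1 / ((x : ℂ) + ((-V : ℝ) : ℂ) * I)) - (∫ x in -c..c, 1 / ((x : ℂ) + ↑V * I))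
      = I * ((4 * Real.arctan (c / V) : ℝ) : ℂ) := by
    rw [← intervalIntegral.integral_sub ((cH1 _ (neg_ne_zero.2 hV')).intervalIntegrable _ _)
      ((cH1 _ hV').intervalIntegrable _ _), ← integral_cauchy V c hV, ← intervalIntegral.integral_const_mul]
    congr 1; ext x
    have a1 := ne_zero_of_im x V hV'
    have a2 := ne_zero_of_im x (-V) (neg_ne_zero.2 hV')
    have a3 : ((V : ℂ) ^ 2 + (x : ℂ) ^ 2) ≠ 0 := by
      have : V ^ 2 + x ^ 2 ≠ 0 := by positivity
      exact_mod_cast this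
    rw [div_sub_div _ _ a2 a1]
    push_cast at a2 ⊢
    rw [← mul_div_assoc, div_eq_div_iff (mul_ne_zero a2 a1) a3]
    ring_nf
    simp only [I_pow_three]; ring
  have hat : Real.arctan (c / V) = Real.pi / 2 - Real.arctan (V / c) := by
    rw [← Real.arctan_inv_of_pos (by positivity), inv_div]
  have hk : I * (kerF c V L - 2 * Real.pi) = -(I * kerF c V (-L))
     - (∫ x in -c..c, Complex.exp (((x : ℂ) + ((-V : ℝ) : ℂ) * I) * (L : ℂ)) / ((x : ℂ) + ((-V : ℝ) : ℂ) * I))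
     + (∫ x in -c..c, Complex.exp (((x : ℂ) + ↑V * I) * (L : ℂ)) / ((x : ℂ) + ↑V * I)) := by
    rw [hat] at i2
    push_cast at i1 i2 hr ⊢
    linear_combination hr + I * i1 + i2
  have hn : ‖kerF c V L - 2 * Real.pi‖ = ‖I * (kerF c V L - 2 * Real.pi)‖ := by simp
  rw [hn, hk]
  have e1 := horiz_le (-c) c (-V) L (by linarith) (by linarith) hL.ne'
  have e2 := horiz_le (-c) c V L (by linarith) (by linarith) hL.ne'
  have e3 := kerF_neg c V (-L) hc hV (by linarith)
  refine (norm_add_le _ _).trans ?_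
  refine (add_le_add (norm_sub_le _ _) le_rfl).trans ?_
  rw [norm_neg, norm_mul, norm_I, one_mul]
  refine (add_le_add (add_le_add e3 e1) e2).trans ?_
  rw [abs_neg, abs_of_pos hV, neg_neg]
  have h1 : Real.exp (c * -L) ≤ Real.exp (c * L) := by
    apply Real.exp_le_exp.2; nlinarith
  have h6 : (Real.exp (c * L) - Real.exp (-c * L)) / L / V ≤ Real.exp (c * L) / (V * L) := by
    rw [div_div, mul_comm L V]
    gcongr
    linarith [Real.exp_pos (-c * L)]
  have h7 : 2 * Real.exp (c * -L) / (V * L) ≤ 2 * Real.exp (c * L) / (V * L) := by gcongr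
  have h8 : 4 * Real.exp (c * L) / (V * L) = 2 * Real.exp (c * L) / (V * L) + Real.exp (c * L) / (V * L) + Real.exp (c * L) / (V * L) := by ring
  rw [h8]; linarith

lemma kerF_triv (c V L : ℝ) (hc : 1 ≤ c) (hV : 1 ≤ V) :
    ‖kerF c V L‖ ≤ Real.exp (c * L) * (2 + 2 * Real.log V) := by
  have hc' : c ≠ 0 := by linarith
  have cV : Continuous fun t : ℝ =>
      Complex.exp (((c : ℂ) + ↑t * I) * (L : ℂ)) / ((c : ℂ) + ↑t * I) := 
    Continuous.div (by fun_prop) (by fun_prop) fun t => ne_zero_of_re c t hc'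
  have hb : ∀ t : ℝ, ‖Complex.exp (((c : ℂ) + ↑t * I) * (L : ℂ)) / ((c : ℂ) + ↑t * I)‖ ≤ Real.exp (c * L) * 1 := by
    intro t
    rw [norm_div, norm_exp_ker, mul_one]
    exact div_le_self (Real.exp_pos _).le ((hc.trans (le_abs_self c)).trans (abs_re_le_norm' c t))
  have h1 : ‖∫ t in (-1 : ℝ)..1, Complex.exp (((c : ℂ) + ↑t * I) * (L : ℂ)) / ((c : ℂ) + ↑t * I)‖ ≤ Real.exp (c * L) * 1 * |1 - (-1)| :=
    intervalIntegral.norm_integral_le_of_norm_le_const fun t _ => hb t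
  have iI : ∀ a b : ℝ, IntervalIntegrable (fun t : ℝ =>
      Complex.exp (((c : ℂ) + ↑t * I) * (L : ℂ)) / ((c : ℂ) + ↑t * I)) MeasureTheory.volume a b :=
    fun a b => cV.intervalIntegrable a b
  have hlog : ∫ t in (1 : ℝ)..V, Real.exp (c * L) * (1 / t) = Real.exp (c * L) * Real.log V := by
    rw [intervalIntegral.integral_const_mul, integral_one_div_of_pos one_pos (by linarith), div_one]
  have iR : IntervalIntegrable (fun t : ℝ => Real.exp (c * L) * (1 / t)) MeasureTheory.volume 1 V := by
    apply ContinuousOn.intervalIntegrable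
    rw [Set.uIcc_of_le hV]
    intro t ht
    have : t ≠ 0 := by linarith [ht.1]
    apply ContinuousAt.continuousWithinAt
    fun_prop (disch := assumption)
  have h2 : ‖∫ t in (1 : ℝ)..V, Complex.exp (((c : ℂ) + ↑t * I) * (L : ℂ)) / ((c : ℂ) + ↑t * I)‖ ≤ Real.exp (c * L) * Real.log V := by
    rw [← hlog]
    apply intervalIntegral.norm_integral_le_of_norm_le hV _ iR
    refine Filter.Eventually.of_forall fun t ht => ?_
    refine (norm_ker_le c t L (by linarith [ht.1])).trans ?_
    rw [abs_of_pos (by linarith [ht.1]), mul_one_div]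
  have h3 : ‖∫ t in (-V)..(-1), Complex.exp (((c : ℂ) + ↑t * I) * (L : ℂ)) / ((c : ℂ) + ↑t * I)‖ ≤ Real.exp (c * L) * Real.log V := by
    rw [← hlog, ← intervalIntegral.integral_comp_neg]
    apply intervalIntegral.norm_integral_le_of_norm_le hV _ iR
    refine Filter.Eventually.of_forall fun t ht => ?_
    refine (norm_ker_le c (-t) L (by linarith [ht.1])).trans ?_
    rw [abs_neg, abs_of_pos (by linarith [ht.1]), mul_one_div]
  rw [kerF, ← intervalIntegral.integral_add_adjacent_intervals (iI (-V) 1) (iI 1 V),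
    ← intervalIntegral.integral_add_adjacent_intervals (iI (-V) (-1)) (iI (-1) 1)]
  refine (norm_add_le _ _).trans ?_
  refine (add_le_add (norm_add_le _ _) le_rfl).trans ?_
  refine (add_le_add (add_le_add h3 h1) h2).trans (le_of_eq ?_)
  norm_num; ring

/-- `Λ(r) log^n r` as an arithmetic function. -/
noncomputable def lamLog (n : ℕ) : ArithmeticFunction ℝ :=
  ⟨fun r => ArithmeticFunction.vonMangoldt r * Real.log r ^ n, by simp⟩

/-- `∑_{r ∣ k} Λ(r) log^n r`. -/
noncomputable def pairCoef (n : ℕ) (k : ℕ) : ℝ :=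
  ((ArithmeticFunction.zeta : ArithmeticFunction ℝ) * lamLog n) k

lemma lamLog_apply (n r : ℕ) :
    lamLog n r = ArithmeticFunction.vonMangoldt r * Real.log r ^ n := rfl

lemma pairCoef_eq (n k : ℕ) : pairCoef n k =
    ∑ r ∈ k.divisors, ArithmeticFunction.vonMangoldt r * Real.log r ^ n := by
  rw [pairCoef, ArithmeticFunction.coe_zeta_mul_apply]; rfl

lemma pairCoef_nonneg (n k : ℕ) : 0 ≤ pairCoef n k := by
  rw [pairCoef_eq]
  exact Finset.sum_nonneg fun r _ => mul_nonneg ArithmeticFunction.vonMangoldt_nonneg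
    (pow_nonneg (Real.log_natCast_nonneg r) n)

lemma pairCoef_zero (n : ℕ) : pairCoef n 0 = 0 := by simp [pairCoef_eq]

lemma pairCoef_le (n k : ℕ) : pairCoef n k ≤ Real.log k ^ (n + 1) := by
  rw [pairCoef_eq, pow_succ', ← ArithmeticFunction.vonMangoldt_sum, Finset.sum_mul]
  refine Finset.sum_le_sum fun r hr => ?_
  refine mul_le_mul_of_nonneg_left ?_ ArithmeticFunction.vonMangoldt_nonneg
  rw [ArithmeticFunction.vonMangoldt_sum]
  refine pow_le_pow_left₀ (Real.log_natCast_nonneg r) ?_ n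
  have h1 : 0 < r := Nat.pos_of_mem_divisors hr
  apply Real.log_le_log (by exact_mod_cast h1)
  exact_mod_cast Nat.divisor_le hr

lemma pairSum_eq (n : ℕ) (Y : ℝ) (hY : 0 ≤ Y) :
    vonMangoldtPairSum n Y = ∑ k ∈ Finset.range (⌊Y⌋₊ + 1), pairCoef n k := by
  have h0 : ∑ k ∈ Finset.range (⌊Y⌋₊ + 1), pairCoef n k = ∑ k ∈ Finset.Ioc 0 ⌊Y⌋₊, pairCoef n k := by
    symm
    apply Finset.sum_subset
    · intro k hk
      simp only [Finset.mem_Ioc, Finset.mem_range] at *; omega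
    · intro k hk hk'
      have : k = 0 := by
        simp only [Finset.mem_Ioc, Finset.mem_range] at *; omega
      rw [this, pairCoef_zero]
  rw [h0]
  simp only [pairCoef]
  rw [ArithmeticFunction.sum_Ioc_mul_eq_sum_prod_filter, vonMangoldtPairSum]
  apply Finset.sum_congr
  · ext ⟨a, b⟩
    simp only [Finset.mem_filter, Finset.mem_product, Finset.mem_Icc, Finset.mem_Ioc, Nat.le_floor_iff hY]
    push_cast
    rfl
  · rintro ⟨a, b⟩ h
    simp only [Finset.mem_filter, Finset.mem_product, Finset.mem_Ioc] at h
    have : a ≠ 0 := by omega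
    simp [lamLog_apply, this]

lemma logMul_iter (n k : ℕ) (f : ℕ → ℂ) :
    (LSeries.logMul^[n] f) k = Complex.log k ^ n * f k := by
  induction n with
  | zero => simp
  | succ n ih =>
    rw [Function.iterate_succ', Function.comp_apply, LSeries.logMul, ih, pow_succ']; ring

lemma abscissa_vM :
    LSeries.abscissaOfAbsConv (fun k => ((ArithmeticFunction.vonMangoldt k : ℝ) : ℂ)) ≤ 1 := by
  apply LSeries.abscissaOfAbsConv_le_of_forall_lt_LSeriesSummable'
  intro y hy
  apply ArithmeticFunction.LSeriesSummable_vonMangoldt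
  simpa using (by exact_mod_cast hy : (1:ℝ) < y)

lemma pairCoef_conv (n : ℕ) :
    (fun k => ((pairCoef n k : ℝ) : ℂ)) = LSeries.convolution 1
      (LSeries.logMul^[n] (fun k => ((ArithmeticFunction.vonMangoldt k : ℝ) : ℂ))) := by
  ext k
  rw [LSeries.convolution_def, pairCoef, ArithmeticFunction.mul_apply]
  push_cast
  apply Finset.sum_congr rfl
  intro p hp
  have : p.1 ≠ 0 := by
    have := Nat.ne_zero_of_mem_divisorsAntidiagonal hp
    exact this.1
  rw [logMul_iter, lamLog_apply]
  push_cast [Complex.natCast_log]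
  simp [this, mul_comm]

lemma pairCoef_hasSum (n : ℕ) (s : ℂ) (hs : 1 < s.re) :
    LSeriesHasSum (fun k => ((pairCoef n k : ℝ) : ℂ)) s
      ((-1) ^ (n + 1) * (iteratedDeriv n (fun s => deriv riemannZeta s / riemannZeta s) s
        * riemannZeta s)) := by
  have hab : LSeries.abscissaOfAbsConv (fun k => ((ArithmeticFunction.vonMangoldt k : ℝ) : ℂ)) < s.re :=
    abscissa_vM.trans_lt (by exact_mod_cast hs)
  have h1 : iteratedDeriv n (fun s => deriv riemannZeta s / riemannZeta s) s =
      - ((-1) ^ n * LSeries (LSeries.logMul^[n] (fun k => ((ArithmeticFunction.vonMangoldt k : ℝ) : ℂ))) s) := by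
    rw [← LSeries_iteratedDeriv n hab, ← iteratedDeriv_neg]
    apply Filter.EventuallyEq.iteratedDeriv_eq
    filter_upwards [(isOpen_lt continuous_const continuous_re).mem_nhds hs] with z hz
    rw [Pi.neg_apply, ArithmeticFunction.LSeries_vonMangoldt_eq_deriv_riemannZeta_div hz]
    ring
  have hs1 : LSeriesSummable (LSeries.logMul^[n] (fun k => ((ArithmeticFunction.vonMangoldt k : ℝ) : ℂ))) s := by
    apply LSeriesSummable_of_abscissaOfAbsConv_lt_re
    rwa [LSeries.absicssaOfAbsConv_logPowMul]
  have hs0 : LSeriesSummable 1 s := LSeriesSummable_one_iff.2 hs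
  rw [pairCoef_conv, h1, ← LSeries_one_eq_riemannZeta hs]
  convert hs0.LSeriesHasSum.convolution hs1.LSeriesHasSum using 1
  have : ((-1 : ℂ) ^ n) * (-1) ^ n = 1 := by rw [← mul_pow]; simp
  rw [pow_succ]
  linear_combination (LSeries 1 s * LSeries (LSeries.logMul^[n] (fun k => ((ArithmeticFunction.vonMangoldt k : ℝ) : ℂ))) s) * this

lemma ratio_cpow (Y : ℝ) (hY : 0 < Y) (k : ℕ) (hk : k ≠ 0) (s : ℂ) :
    (Y : ℂ) ^ s / (k : ℂ) ^ s = Complex.exp (s * ((Real.log (Y / k) : ℝ) : ℂ)) := by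
  have hk' : (k : ℝ) ≠ 0 := by exact_mod_cast hk
  rw [Complex.cpow_def_of_ne_zero (by exact_mod_cast hY.ne'),
    Complex.cpow_def_of_ne_zero (by exact_mod_cast hk), ← Complex.exp_sub, Real.log_div hY.ne' hk']
  push_cast [Complex.ofReal_log hY.le]
  ring_nf

lemma perron_hasSum (n : ℕ) (c V Y : ℝ) (hc : 1 < c) (hY : 0 < Y) :
    HasSum (fun k : ℕ => ((pairCoef n k : ℝ) : ℂ) * (kerF c V (Real.log (Y / k)) / (2 * Real.pi)))
      ((-1) ^ (n + 1) * perronIntegral n c V Y) := by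
  have key : HasSum (fun k : ℕ => ∫ t in -V..V, ((pairCoef n k : ℝ) : ℂ) *
        (Complex.exp ((↑c + ↑t * I) * ((Real.log (Y / k) : ℝ) : ℂ)) / (↑c + ↑t * I)))
      (∫ t in -V..V, (-1) ^ (n + 1) * (iteratedDeriv n (fun s => deriv riemannZeta s / riemannZeta s) (↑c + ↑t * I) *
        riemannZeta (↑c + ↑t * I) * (Y : ℂ) ^ (↑c + ↑t * I) / (↑c + ↑t * I))) := by
    have hS : Summable fun k : ℕ => pairCoef n k * Real.exp (c * Real.log (Y / k)) := by
      have h := (pairCoef_hasSum n c (by simpa using hc)).LSeriesSummable.norm.mul_left (‖(Y : ℂ) ^ (c : ℂ)‖)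
      refine h.congr fun k => ?_
      rcases eq_or_ne k 0 with rfl | hk
      · simp [pairCoef_zero]
      · rw [LSeries.term_of_ne_zero hk, ← norm_mul, ← mul_div_assoc, mul_comm, mul_div_assoc,
          ratio_cpow Y hY k hk, norm_mul, ← Complex.ofReal_mul, Complex.norm_exp, Complex.ofReal_re,
          Complex.norm_real, Real.norm_of_nonneg (pairCoef_nonneg n k)]
    refine intervalIntegral.hasSum_integral_of_dominated_convergence
      (fun k _ => pairCoef n k * Real.exp (c * Real.log (Y / k))) ?_ ?_ ?_ ?_ ?_
    · intro k
      apply Continuous.aestronglyMeasurable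
      refine Continuous.mul continuous_const ?_
      exact Continuous.div (by fun_prop) (by fun_prop) fun t => ne_zero_of_re c t (by linarith)
    · intro k
      refine Filter.Eventually.of_forall fun t _ => ?_
      rw [norm_mul, Complex.norm_real, Real.norm_of_nonneg (pairCoef_nonneg n k), norm_div, norm_exp_ker]
      refine mul_le_mul_of_nonneg_left ?_ (pairCoef_nonneg n k)
      exact div_le_self (Real.exp_pos _).le ((hc.le.trans (le_abs_self c)).trans (abs_re_le_norm' c t))
    · exact Filter.Eventually.of_forall fun t _ => hS
    · exact intervalIntegrable_const
    · refine Filter.Eventually.of_forall fun t _ => ?_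
      have h := (pairCoef_hasSum n (c + t * I) (by simpa using hc)).mul_right
        ((Y : ℂ) ^ ((c : ℂ) + t * I) / ((c : ℂ) + t * I))
      convert h using 1
      · rfl
      · ext k
        rcases eq_or_ne k 0 with rfl | hk
        · simp [pairCoef_zero]
        · rw [LSeries.term_of_ne_zero hk, ← ratio_cpow Y hY k hk]; ring
      · ring
  have h2 := key.mul_left (((1 / (2 * Real.pi) : ℝ) : ℂ))
  convert h2 using 1
  · rfl
  · ext k
    rw [intervalIntegral.integral_const_mul, kerF]; push_cast; ring
  · rw [intervalIntegral.integral_const_mul, perronIntegral]; ring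

lemma diff_hasSum (n : ℕ) (c V Y : ℝ) (hc : 1 < c) (hY : 0 < Y) :
    HasSum (fun k : ℕ => ((pairCoef n k : ℝ) : ℂ) *
        ((if k < ⌊Y⌋₊ + 1 then 1 else 0) - kerF c V (Real.log (Y / k)) / (2 * Real.pi)))
      (((vonMangoldtPairSum n Y : ℝ) : ℂ) - (-1) ^ (n + 1) * perronIntegral n c V Y) := by
  have h1 : HasSum (fun k : ℕ => ((pairCoef n k : ℝ) : ℂ) * (if k < ⌊Y⌋₊ + 1 then 1 else 0))
      ((vonMangoldtPairSum n Y : ℝ) : ℂ) := by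
    rw [pairSum_eq n Y hY.le]
    have : ((∑ k ∈ Finset.range (⌊Y⌋₊ + 1), pairCoef n k : ℝ) : ℂ) = ∑ k ∈ Finset.range (⌊Y⌋₊ + 1),
        ((pairCoef n k : ℝ) : ℂ) * (if k < ⌊Y⌋₊ + 1 then 1 else 0) := by
      push_cast
      refine Finset.sum_congr rfl fun k hk => ?_
      rw [if_pos (Finset.mem_range.1 hk), mul_one]
    rw [this]
    apply hasSum_sum_of_ne_finset_zero
    intro k hk
    rw [if_neg (by simpa using hk), mul_zero]
  have h2 := h1.sub (perron_hasSum n c V Y hc hY)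
  convert h2 using 1
  · rfl
  · ext k; ring

lemma sum_rpow_le (δ : ℝ) (hδ : 0 < δ) :
    Summable (fun j : ℕ => 1 / ((j : ℝ) + 1) ^ (1 + δ)) ∧
    ∑' j : ℕ, 1 / ((j : ℝ) + 1) ^ (1 + δ) ≤ 1 + 1 / δ := by
  constructor
  · have := (Real.summable_one_div_nat_rpow (p := 1 + δ)).2 (by linarith)
    have h := (summable_nat_add_iff 1).2 this
    simpa using h
  · have h := ZetaAsymptotics.zeta_limit_aux1 (s := 1 + δ) (by linarith)
    have h2 : 0 ≤ ZetaAsymptotics.termTSum (1 + δ) :=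
      tsum_nonneg fun k => ZetaAsymptotics.term_nonneg _ _
    have h3 : 0 ≤ (1 + δ) * ZetaAsymptotics.termTSum (1 + δ) := by positivity
    rw [show 1 + δ - 1 = δ by ring] at h
    linarith

lemma log_pow_le (n : ℕ) (δ x : ℝ) (hδ : 0 < δ) (hx : 1 ≤ x) :
    Real.log x ^ (n + 1) ≤ ((n + 1) / δ) ^ (n + 1) * x ^ δ := by
  have hn : (0 : ℝ) < n + 1 := by positivity
  have h := Real.log_le_rpow_div (x := x) (ε := δ / (n + 1)) (by linarith) (by positivity)
  have h2 := pow_le_pow_left₀ (Real.log_nonneg hx) h (n + 1)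
  refine h2.trans (le_of_eq ?_)
  rw [div_pow, ← Real.rpow_natCast (x ^ _), ← Real.rpow_mul (by linarith)]
  push_cast
  rw [div_mul_cancel₀ _ hn.ne', div_pow, div_pow]
  field_simp

lemma sum_harm (N : ℕ) :
    ∑ k ∈ Finset.Ico 1 N, (1 / (k : ℝ) + 1 / ((N : ℝ) - k)) ≤ 2 * (1 + Real.log N) := by
  have hh : ∑ k ∈ Finset.Ico 1 N, 1 / (k : ℝ) ≤ 1 + Real.log N := by
    have h1 := harmonic_le_one_add_log N
    rw [harmonic_eq_sum_Icc] at h1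
    push_cast at h1
    refine le_trans ?_ h1
    simp only [one_div]
    refine Finset.sum_le_sum_of_subset_of_nonneg ?_ fun i _ _ => by positivity
    intro k hk
    simp only [Finset.mem_Ico, Finset.mem_Icc] at *; omega
  have h2 : ∑ k ∈ Finset.Ico 1 N, 1 / ((N : ℝ) - k) = ∑ k ∈ Finset.Ico 1 N, 1 / (k : ℝ) := by
    refine Finset.sum_bij (fun k _ => N - k) ?_ ?_ ?_ ?_
    · intro k hk
      simp only [Finset.mem_Ico] at *; omega
    · intro a ha b hb h
      simp only [Finset.mem_Ico] at *; omega
    · intro b hb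
      refine ⟨N - b, ?_, ?_⟩ <;> simp only [Finset.mem_Ico] at * <;> omega
    · intro k hk
      rw [Finset.mem_Ico] at hk
      rw [Nat.cast_sub hk.2.le]
  rw [Finset.sum_add_distrib, h2]; linarith

lemma exp_clog (c Y : ℝ) (k : ℕ) (hY : 0 < Y) (hk : 1 ≤ k) :
    Real.exp (c * Real.log (Y / k)) = Y ^ c / (k : ℝ) ^ c := by
  have hk' : (0 : ℝ) < k := by exact_mod_cast hk
  rw [← Real.div_rpow hY.le hk'.le, Real.rpow_def_of_pos (by positivity), mul_comm]

lemma rpow_c_le (Y c : ℝ) (hY : 7 ≤ Y) (hc : c = 1 + 1 / Real.log (2 * Real.pi * Y)) :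
    Y ^ c ≤ 3 * Y := by
  have hY0 : 0 < Y := by linarith
  have hpi := Real.pi_gt_three
  have hl : 0 < Real.log Y := Real.log_pos (by linarith)
  have hle : Real.log Y ≤ Real.log (2 * Real.pi * Y) := by
    apply Real.log_le_log hY0; nlinarith
  rw [hc, Real.rpow_add hY0, Real.rpow_one, mul_comm]
  refine mul_le_mul_of_nonneg_right ?_ hY0.le
  rw [Real.rpow_def_of_pos hY0]
  refine le_trans (Real.exp_le_exp.2 (?_ : _ ≤ (1 : ℝ))) ?_
  · rw [mul_one_div]; exact div_le_one_of_le₀ hle (hl.le.trans hle)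
  · linarith [Real.exp_one_lt_d9]

lemma norm_two_pi_div (z : ℂ) : ‖z / (2 * Real.pi)‖ = ‖z‖ / (2 * Real.pi) := by
  rw [norm_div]; congr 1
  have : (2 * Real.pi : ℂ) = ((2 * Real.pi : ℝ) : ℂ) := by push_cast; rfl
  rw [this, Complex.norm_real, Real.norm_of_nonneg (by positivity)]

lemma term_small (c V Y : ℝ) (k : ℕ) (hY : 7 ≤ Y) (hc : 1 ≤ c) (hYc : Y ^ c ≤ 3 * Y) (hV : 0 < V)
    (hk : 1 ≤ k) (hkN : k < ⌊Y⌋₊) :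
    ‖1 - kerF c V (Real.log (Y / k)) / (2 * Real.pi)‖ ≤
      3 * (Y / V) * (1 / (k : ℝ) + 1 / ((⌊Y⌋₊ : ℝ) - k)) := by
  have hY0 : 0 < Y := by linarith
  have hk' : (1 : ℝ) ≤ k := by exact_mod_cast hk
  have hk0 : (0 : ℝ) < k := by linarith
  have hN : (k : ℝ) < ⌊Y⌋₊ := by exact_mod_cast hkN
  have hNY : (⌊Y⌋₊ : ℝ) ≤ Y := Nat.floor_le hY0.le
  have hpi := Real.pi_gt_three
  have hLge : (Y - k) / Y ≤ Real.log (Y / k) := by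
    have := Real.one_sub_inv_le_log_of_pos (x := Y / k) (by positivity)
    rw [inv_div] at this
    rwa [sub_div, div_self hY0.ne']
  have hYk : 0 < Y - k := by linarith
  have hL0 : 0 < Real.log (Y / k) := lt_of_lt_of_le (by positivity) hLge
  have e : (1 : ℂ) - kerF c V (Real.log (Y / k)) / (2 * Real.pi) =
      -((kerF c V (Real.log (Y / k)) - 2 * Real.pi) / (2 * Real.pi)) := by
    have : (Real.pi : ℂ) ≠ 0 := by exact_mod_cast Real.pi_ne_zero
    field_simp; ring
  rw [e, norm_neg, norm_two_pi_div]
  have h1 := kerF_pos c V (Real.log (Y / k)) (by linarith) hV hL0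
  rw [exp_clog c Y k hY0 hk] at h1
  have hkc : (k : ℝ) ≤ (k : ℝ) ^ c := Real.self_le_rpow_of_one_le hk' hc
  have h2 : Y ^ c / (k : ℝ) ^ c ≤ 3 * Y / k := by gcongr
  calc _ ≤ 4 * (Y ^ c / (k : ℝ) ^ c) / (V * Real.log (Y / k)) / (2 * Real.pi) := by gcongr
    _ ≤ 4 * (3 * Y / k) / (V * ((Y - k) / Y)) / 4 := by gcongr; linarith
    _ = 3 * (Y / V) * (1 / k + 1 / (Y - k)) := by field_simp; ring
    _ ≤ _ := by gcongr

lemma term_tail (c V Y : ℝ) (j : ℕ) (hY : 7 ≤ Y) (hc : 1 ≤ c) (hYc : Y ^ c ≤ 3 * Y) (hV : 0 < V) :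
    ‖kerF c V (Real.log (Y / ((j + (⌊Y⌋₊ + 2) : ℕ) : ℝ))) / (2 * Real.pi)‖ ≤
      3 * (Y / V) * (((j + (⌊Y⌋₊ + 2) : ℕ) : ℝ) ^ (-(c - 1)) * (1 / ((j : ℝ) + 1))) := by
  set k : ℕ := j + (⌊Y⌋₊ + 2) with hk
  have hY0 : 0 < Y := by linarith
  have hNY : Y < (⌊Y⌋₊ : ℝ) + 1 := Nat.lt_floor_add_one Y
  have hkY : (j : ℝ) + 1 ≤ k - Y := by rw [hk]; push_cast; linarith
  have hj : (0 : ℝ) ≤ j := by positivity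
  have hk0 : (0 : ℝ) < k := by linarith
  have hpi := Real.pi_gt_three
  have hLge : ((j : ℝ) + 1) / k ≤ -Real.log (Y / k) := by
    have := Real.one_sub_inv_le_log_of_pos (x := k / Y) (by positivity)
    rw [inv_div] at this
    rw [← Real.log_inv, inv_div]
    refine le_trans ?_ this
    rw [div_le_iff₀ hk0, sub_mul, div_mul_cancel₀ _ hk0.ne']; linarith
  have hL0 : 0 < -Real.log (Y / k) := lt_of_lt_of_le (by positivity) hLge
  have h1 := kerF_neg c V (Real.log (Y / k)) (by linarith) hV (by linarith)
  rw [exp_clog c Y k hY0 (by omega)] at h1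
  rw [norm_two_pi_div]
  calc _ ≤ 2 * (Y ^ c / (k : ℝ) ^ c) / (V * -Real.log (Y / k)) / (2 * Real.pi) := by gcongr
    _ ≤ 2 * (3 * Y / (k : ℝ) ^ c) / (V * (((j : ℝ) + 1) / k)) / 2 := by gcongr; linarith
    _ = _ := by
      rw [show -(c - 1) = 1 - c by ring, Real.rpow_sub hk0, Real.rpow_one]
      field_simp

lemma term_mid (c V Y : ℝ) (k : ℕ) (b : ℂ) (hb : ‖b‖ ≤ 1) (hY : 7 ≤ Y) (hc : 1 ≤ c) (hc2 : c ≤ 2) (hV : 2 ≤ V)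
    (hVY : V ≤ Y) (hk : Y / 2 ≤ k) :
    ‖b - kerF c V (Real.log (Y / k)) / (2 * Real.pi)‖ ≤ 4 * Real.log Y := by
  have hY0 : 0 < Y := by linarith
  have hk0 : (0 : ℝ) < k := by linarith
  have hpi := Real.pi_gt_three
  have hlY : 1 ≤ Real.log Y := by
    rw [Real.le_log_iff_exp_le hY0]; linarith [Real.exp_one_lt_d9]
  have hlV : Real.log V ≤ Real.log Y := Real.log_le_log (by linarith) hVY
  have h1 := kerF_triv c V (Real.log (Y / k)) hc (by linarith)
  have hlV0 : 0 ≤ Real.log V := Real.log_nonneg (by linarith)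
  have h2 : Real.exp (c * Real.log (Y / k)) ≤ 4 := by
    rw [mul_comm, ← Real.rpow_def_of_pos (by positivity)]
    have h3 : Y / k ≤ 2 := by rw [div_le_iff₀ hk0]; linarith
    calc (Y / k) ^ c ≤ 2 ^ c := Real.rpow_le_rpow (by positivity) h3 (by linarith)
      _ ≤ 2 ^ (2 : ℝ) := Real.rpow_le_rpow_of_exponent_le (by norm_num) hc2
      _ = 4 := by norm_num
  refine (norm_sub_le _ _).trans ?_
  rw [norm_two_pi_div]
  have h4 : ‖kerF c V (Real.log (Y / k))‖ / (2 * Real.pi) ≤ 4 * (2 + 2 * Real.log Y) / 6 := by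
    have : ‖kerF c V (Real.log (Y / k))‖ ≤ 4 * (2 + 2 * Real.log Y) := h1.trans (by gcongr)
    gcongr
    linarith
  linarith

theorem truncated_perron (n : ℕ) (hn : 1 ≤ n) :
    ∃ K > (0 : ℝ), ∃ Y₀ : ℝ, ∀ Y ≥ Y₀, ∀ V : ℝ, 2 ≤ V → V ≤ Y →
      ∀ c : ℝ, c = 1 + 1 / Real.log (2 * Real.pi * Y) →
        ‖(-1 : ℂ) ^ (n + 1) * ((vonMangoldtPairSum n Y : ℝ) : ℂ) -
            perronIntegral n c V Y‖ ≤
          K * (Y / V) * Real.log Y ^ (n + 2) := by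
  refine ⟨12 + 2 * (2 ^ (n + 1) * 4) + 15 * (4 * (n + 1)) ^ (n + 1), by positivity, 7, ?_⟩
  intro Y hY V hV hVY c hc
  have hY' : (7 : ℝ) ≤ Y := hY
  have hY0 : 0 < Y := by linarith
  have hV0 : 0 < V := by linarith
  have hpi := Real.pi_gt_three
  have hpi' := Real.pi_lt_d2
  set l := Real.log Y with hl
  have hl1 : 1 ≤ l := by
    rw [hl, Real.le_log_iff_exp_le hY0]; linarith [Real.exp_one_lt_d9]
  set ℓ := Real.log (2 * Real.pi * Y) with hℓ
  have hle1 : l ≤ ℓ := by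
    apply Real.log_le_log hY0; nlinarith
  have hle2 : ℓ ≤ 2 * l := by
    have : 2 * l = Real.log (Y * Y) := by rw [Real.log_mul hY0.ne' hY0.ne']; ring
    rw [this]
    apply Real.log_le_log (by positivity); nlinarith
  have hℓ0 : 0 < ℓ := by linarith
  have hYc := rpow_c_le Y c hY' hc
  have hc1 : 1 < c := by rw [hc]; have : 0 < 1 / ℓ := by positivity
                         linarith
  have hc2 : c ≤ 2 := by
    have : 1 / ℓ ≤ 1 := by rw [div_le_one hℓ0]; linarith
    rw [hc]; linarith
  have hYV : 1 ≤ Y / V := by rwa [one_le_div hV0]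
  have hNY : (⌊Y⌋₊ : ℝ) ≤ Y := Nat.floor_le hY0.le
  have hNY2 : Y < (⌊Y⌋₊ : ℝ) + 1 := Nat.lt_floor_add_one Y
  -- reduce to the series
  have hnorm : ‖(-1 : ℂ) ^ (n + 1) * ((vonMangoldtPairSum n Y : ℝ) : ℂ) - perronIntegral n c V Y‖ =
      ‖((vonMangoldtPairSum n Y : ℝ) : ℂ) - (-1) ^ (n + 1) * perronIntegral n c V Y‖ := by
    have h1 : ((-1 : ℂ) ^ (n + 1)) * (-1) ^ (n + 1) = 1 := by rw [← mul_pow]; simp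
    have h2 : ((vonMangoldtPairSum n Y : ℝ) : ℂ) - (-1) ^ (n + 1) * perronIntegral n c V Y =
        (-1) ^ (n + 1) * ((-1 : ℂ) ^ (n + 1) * ((vonMangoldtPairSum n Y : ℝ) : ℂ) - perronIntegral n c V Y) := by
      linear_combination (-((vonMangoldtPairSum n Y : ℝ) : ℂ)) * h1
    rw [h2, norm_mul, norm_pow, norm_neg, norm_one, one_pow, one_mul]
  rw [hnorm]
  have hsum := diff_hasSum n c V Y hc1 hY0
  set S := ((vonMangoldtPairSum n Y : ℝ) : ℂ) - (-1) ^ (n + 1) * perronIntegral n c V Y with hS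
  set f : ℕ → ℂ := fun k : ℕ => ((pairCoef n k : ℝ) : ℂ) *
        ((if k < ⌊Y⌋₊ + 1 then 1 else 0) - kerF c V (Real.log (Y / k)) / (2 * Real.pi)) with hf
  have hfn : ∀ k, ‖f k‖ = pairCoef n k * ‖(if k < ⌊Y⌋₊ + 1 then (1 : ℂ) else 0) - kerF c V (Real.log (Y / k)) / (2 * Real.pi)‖ := by
    intro k
    rw [hf]; simp only
    rw [norm_mul, Complex.norm_real, Real.norm_of_nonneg (pairCoef_nonneg n k)]
  -- head
  have hhead : ∑ k ∈ Finset.range ⌊Y⌋₊, ‖f k‖ ≤ 12 * (Y / V) * l ^ (n + 2) := by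
    have hN1 : 1 ≤ ⌊Y⌋₊ := Nat.le_floor (by push_cast; linarith)
    have h0 : ∑ k ∈ Finset.range ⌊Y⌋₊, ‖f k‖ = ∑ k ∈ Finset.Ico 1 ⌊Y⌋₊, ‖f k‖ := by
      rw [Finset.range_eq_Ico, Finset.sum_eq_sum_Ico_succ_bot (by omega)]
      simp [hfn, pairCoef_zero]
    rw [h0]
    have hb : ∀ k ∈ Finset.Ico 1 ⌊Y⌋₊, ‖f k‖ ≤
        l ^ (n + 1) * (3 * (Y / V)) * (1 / (k : ℝ) + 1 / ((⌊Y⌋₊ : ℝ) - k)) := by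
      intro k hk
      rw [Finset.mem_Ico] at hk
      rw [hfn, if_pos (by omega), mul_assoc]
      have h1 := term_small c V Y k hY' hc1.le hYc hV0 hk.1 hk.2
      have hk1 : (1 : ℝ) ≤ k := by exact_mod_cast hk.1
      have hkN : (k : ℝ) ≤ ⌊Y⌋₊ := by exact_mod_cast hk.2.le
      have h2 : pairCoef n k ≤ l ^ (n + 1) := by
        refine (pairCoef_le n k).trans ?_
        refine pow_le_pow_left₀ (Real.log_natCast_nonneg k) ?_ _
        exact Real.log_le_log (by linarith) (by linarith)
      exact mul_le_mul h2 h1 (norm_nonneg _) (by positivity)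
    refine (Finset.sum_le_sum hb).trans ?_
    rw [← Finset.mul_sum]
    have h3 := sum_harm ⌊Y⌋₊
    have h4 : Real.log ⌊Y⌋₊ ≤ l := Real.log_le_log (by exact_mod_cast hN1) hNY
    have h5 : ∑ k ∈ Finset.Ico 1 ⌊Y⌋₊, (1 / (k : ℝ) + 1 / ((⌊Y⌋₊ : ℝ) - k)) ≤ 4 * l := by linarith
    calc _ ≤ l ^ (n + 1) * (3 * (Y / V)) * (4 * l) := by gcongr
      _ = _ := by ring
  -- middle
  have hmid : ∀ k : ℕ, Y / 2 ≤ k → (k : ℝ) ≤ 2 * Y → ‖f k‖ ≤ 2 ^ (n + 1) * 4 * (Y / V) * l ^ (n + 2) := by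
    intro k hk1 hk2
    rw [hfn]
    have h1 := term_mid c V Y k (if k < ⌊Y⌋₊ + 1 then (1 : ℂ) else 0) (by split_ifs <;> simp) hY' hc1.le hc2 hV hVY hk1
    have h2 : pairCoef n k ≤ (2 * l) ^ (n + 1) := by
      refine (pairCoef_le n k).trans ?_
      refine pow_le_pow_left₀ (Real.log_natCast_nonneg k) ?_ _
      have : 2 * l = Real.log (Y * Y) := by rw [Real.log_mul hY0.ne' hY0.ne']; ring
      rw [this]
      exact Real.log_le_log (by linarith) (by nlinarith)
    calc _ ≤ (2 * l) ^ (n + 1) * (4 * l) := mul_le_mul h2 h1 (norm_nonneg _) (by positivity)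
      _ = 2 ^ (n + 1) * 4 * 1 * l ^ (n + 2) := by rw [mul_pow]; ring
      _ ≤ _ := by gcongr
  -- tail
  have htail : ‖S - ∑ k ∈ Finset.range (⌊Y⌋₊ + 2), f k‖ ≤ 15 * (4 * (n + 1)) ^ (n + 1) * (Y / V) * l ^ (n + 2) := by
    have ht := (hasSum_nat_add_iff' (⌊Y⌋₊ + 2)).2 hsum
    set δ : ℝ := 1 / (2 * ℓ) with hδ
    have hδ0 : 0 < δ := by positivity
    have hcδ : c - 1 = 2 * δ := by rw [hc, hδ]; field_simp; ring
    obtain ⟨hs1, hs2⟩ := sum_rpow_le δ hδ0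
    have hg := hs1.hasSum.mul_left (3 * (Y / V) * ((n + 1) / δ) ^ (n + 1))
    have hb := ht.norm_le_of_bounded hg (by
      intro j
      have hk0 : (1 : ℝ) ≤ ((j + (⌊Y⌋₊ + 2) : ℕ) : ℝ) := by push_cast; have : (0 : ℝ) ≤ j := by positivity
                                                            linarith
      have h1 := term_tail c V Y j hY' hc1.le hYc hV0
      rw [hfn, if_neg (by omega), zero_sub, norm_neg]
      have hjk : (j : ℝ) + 1 ≤ ((j + (⌊Y⌋₊ + 2) : ℕ) : ℝ) := by push_cast; linarith
      set k : ℕ := j + (⌊Y⌋₊ + 2) with hk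
      have h2 := (pairCoef_le n k).trans (log_pow_le n δ k hδ0 hk0)
      have hkp : (0 : ℝ) < k := by linarith
      have hjp : (0 : ℝ) < (j : ℝ) + 1 := by positivity
      calc _ ≤ ((n + 1) / δ) ^ (n + 1) * (k : ℝ) ^ δ * (3 * (Y / V) * ((k : ℝ) ^ (-(c - 1)) * (1 / ((j : ℝ) + 1)))) :=
            mul_le_mul h2 h1 (norm_nonneg _) (by positivity)
        _ = 3 * (Y / V) * ((n + 1) / δ) ^ (n + 1) * (((k : ℝ) ^ δ * (k : ℝ) ^ (-(c - 1))) * (1 / ((j : ℝ) + 1))) := by ring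
        _ = 3 * (Y / V) * ((n + 1) / δ) ^ (n + 1) * ((k : ℝ) ^ (-δ) * (1 / ((j : ℝ) + 1))) := by
            rw [← Real.rpow_add hkp, hcδ]; ring_nf
        _ ≤ 3 * (Y / V) * ((n + 1) / δ) ^ (n + 1) * (((j : ℝ) + 1) ^ (-δ) * (1 / ((j : ℝ) + 1))) := by
            have : (k : ℝ) ^ (-δ) ≤ ((j : ℝ) + 1) ^ (-δ) :=
              Real.rpow_le_rpow_of_nonpos hjp hjk (by linarith)
            gcongr
        _ = _ := by
            rw [Real.rpow_neg hjp.le, Real.rpow_add hjp, Real.rpow_one]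
            congr 1
            field_simp)
    refine hb.trans ?_
    have hd : 1 / δ = 2 * ℓ := by rw [hδ, one_div_one_div]
    have hd4 : 1 / δ ≤ 4 * l := by rw [hd]; linarith
    have h6 : ∑' j : ℕ, 1 / ((j : ℝ) + 1) ^ (1 + δ) ≤ 5 * l := by linarith
    have h7 : ((n : ℝ) + 1) / δ ≤ (n + 1) * (4 * l) := by
      rw [← mul_one_div]; gcongr
    calc _ ≤ 3 * (Y / V) * ((n + 1) * (4 * l)) ^ (n + 1) * (5 * l) := by gcongr
      _ = _ := by rw [mul_pow, mul_pow, mul_pow]; ring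
  have hm1 := hmid ⌊Y⌋₊ (by linarith) (by linarith)
  have hm2 := hmid (⌊Y⌋₊ + 1) (by push_cast; linarith) (by push_cast; linarith)
  have hdec : S = (S - ∑ k ∈ Finset.range (⌊Y⌋₊ + 2), f k) + (∑ k ∈ Finset.range ⌊Y⌋₊, f k) + f ⌊Y⌋₊ + f (⌊Y⌋₊ + 1) := by
    rw [Finset.sum_range_succ, Finset.sum_range_succ]; ring
  have hfin : ‖S‖ ≤ ‖S - ∑ k ∈ Finset.range (⌊Y⌋₊ + 2), f k‖ + (∑ k ∈ Finset.range ⌊Y⌋₊, ‖f k‖) + ‖f ⌊Y⌋₊‖ + ‖f (⌊Y⌋₊ + 1)‖ := by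
    conv_lhs => rw [hdec]
    refine (norm_add_le _ _).trans (add_le_add ((norm_add_le _ _).trans (add_le_add ((norm_add_le _ _).trans (add_le_add le_rfl (norm_sum_le _ _))) le_rfl)) le_rfl)
  linarith
end
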